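/- arXiv:2210.00630 — 2 statements merged into one kernel-verified Lean document; each statement's English description precedes it below -/
import Mathlib

section
/- There exists a constant C > 0 such that for every ◊-squared Horton set H_◊ with parameters m and k, every point s of the plane stabs at most C·m·k³ empty triangles of H_◊. -/
open scoped Classical

noncomputable section

/-- Euclidean distance between two points of the plane `ℝ × ℝ`. -/
def elen (p q : ℝ × ℝ) : ℝ := Real.sqrt ((p.1 - q.1) ^ 2 + (p.2 - q.2) ^ 2)

/-- Orientation determinant of an ordered triple of points. -/
def orient (a b c : ℝ × ℝ) : ℝ :=
  (b.1 - a.1) * (c.2 - a.2) - (b.2 - a.2) * (c.1 - a.1)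

/-- A planar point set is in general position if no three distinct points are collinear. -/
def GeneralPosition (S : Set (ℝ × ℝ)) : Prop :=
  ∀ a ∈ S, ∀ b ∈ S, ∀ c ∈ S, a ≠ b → a ≠ c → b ≠ c →
    ¬ Collinear ℝ ({a, b, c} : Set (ℝ × ℝ))

/-- No two points of `S` share an `x`-coordinate. -/
def DistinctX (S : Set (ℝ × ℝ)) : Prop :=
  ∀ a ∈ S, ∀ b ∈ S, a ≠ b → a.1 ≠ b.1

/-- `p` lies strictly below the (non-vertical) line through `a` and `b`, where `a.1 < b.1`. -/
def StrictlyBelow (p a b : ℝ × ℝ) : Prop :=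
  (b.1 - a.1) * (p.2 - a.2) < (b.2 - a.2) * (p.1 - a.1)

/-- `p` lies strictly above the (non-vertical) line through `a` and `b`, where `a.1 < b.1`. -/
def StrictlyAbove (p a b : ℝ × ℝ) : Prop :=
  (b.2 - a.2) * (p.1 - a.1) < (b.1 - a.1) * (p.2 - a.2)

/-- `Y` is high above `X`: every line through two points of `Y` is above every point of `X`. -/
def HighAbove (Y X : Set (ℝ × ℝ)) : Prop :=
  ∀ a ∈ Y, ∀ b ∈ Y, a.1 < b.1 → ∀ p ∈ X, StrictlyBelow p a b

/-- `X` is deep below `Y`: every line through two points of `X` is below every point of `Y`. -/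
def DeepBelow (X Y : Set (ℝ × ℝ)) : Prop :=
  ∀ a ∈ X, ∀ b ∈ X, a.1 < b.1 → ∀ p ∈ Y, StrictlyAbove p a b

/-- The even-indexed points of `H` in increasing order of `x`-coordinate (`H₀`). -/
def evenPart (H : Finset (ℝ × ℝ)) : Finset (ℝ × ℝ) :=
  H.filter fun p => Even (H.filter fun q => q.1 < p.1).card

/-- The odd-indexed points of `H` in increasing order of `x`-coordinate (`H₁`). -/
def oddPart (H : Finset (ℝ × ℝ)) : Finset (ℝ × ℝ) :=
  H.filter fun p => ¬ Even (H.filter fun q => q.1 < p.1).card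

/-- Horton sets. -/
inductive IsHorton : Finset (ℝ × ℝ) → Prop
  | small (H : Finset (ℝ × ℝ)) (hgp : GeneralPosition ↑H) (hx : DistinctX ↑H)
      (hcard : H.card ≤ 2) : IsHorton H
  | split (H : Finset (ℝ × ℝ)) (hgp : GeneralPosition ↑H) (hx : DistinctX ↑H)
      (hcard : 2 < H.card) (h0 : IsHorton (evenPart H)) (h1 : IsHorton (oddPart H))
      (hhigh : HighAbove ↑(oddPart H) ↑(evenPart H))
      (hdeep : DeepBelow ↑(evenPart H) ↑(oddPart H)) : IsHorton H

/-- `t` is an empty triangle of the point set `S`: a three-element non-collinear subset of `S`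
whose open interior contains no point of `S`. -/
def IsEmptyTriangleOf (S : Set (ℝ × ℝ)) (t : Finset (ℝ × ℝ)) : Prop :=
  t.card = 3 ∧ (↑t : Set (ℝ × ℝ)) ⊆ S ∧ ¬ Collinear ℝ (↑t : Set (ℝ × ℝ)) ∧
    ∀ p ∈ S, p ∉ interior (convexHull ℝ (↑t : Set (ℝ × ℝ)))

/-- `τ S`: the number of empty triangles of `S`. -/
def tau (S : Set (ℝ × ℝ)) : ℕ :=
  {t : Finset (ℝ × ℝ) | IsEmptyTriangleOf S t}.ncard

/-- The number of empty triangles of `S` stabbed by the point `q`. -/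
def stabbedCount (S : Set (ℝ × ℝ)) (q : ℝ × ℝ) : ℕ :=
  {t : Finset (ℝ × ℝ) | IsEmptyTriangleOf S t ∧
    q ∈ interior (convexHull ℝ (↑t : Set (ℝ × ℝ)))}.ncard

/-- The number of empty triangles of `S` having `q` as a vertex. -/
def incidentCount (S : Set (ℝ × ℝ)) (q : ℝ × ℝ) : ℕ :=
  {t : Finset (ℝ × ℝ) | IsEmptyTriangleOf S t ∧ q ∈ t}.ncard

/-- The `m × m` integer grid `{1,…,m} × {1,…,m}`, viewed inside `ℝ × ℝ`. -/
def grid (m : ℕ) : Finset (ℝ × ℝ) :=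
  (Finset.Icc 1 m ×ˢ Finset.Icc 1 m).image fun p => ((p.1 : ℝ), (p.2 : ℝ))

/-- The points of the grid on the line spanned by `a` and `b`. -/
def gridLine (m : ℕ) (a b : ℝ × ℝ) : Finset (ℝ × ℝ) :=
  (grid m).filter fun x => Collinear ℝ ({a, b, x} : Set (ℝ × ℝ))

/-- Rotation of the plane by (minus) 90 degrees. -/
def rotCW (p : ℝ × ℝ) : ℝ × ℝ := (p.2, -p.1)

/-- `f` is an `ε`-perturbation of the grid `{1,…,m} × {1,…,m}` turning it into a
squared Horton set (of `m ^ 2` points). -/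
structure IsSquaredHorton (m : ℕ) (ε : ℝ) (f : ℝ × ℝ → ℝ × ℝ) : Prop where
  eps_pos : 0 < ε
  eps_lt : ε < 1 / 4
  inj : Set.InjOn f ↑(grid m)
  close : ∀ p ∈ grid m, elen (f p) p ≤ ε
  orient_iff : ∀ a ∈ grid m, ∀ b ∈ grid m, ∀ c ∈ grid m,
    orient a b c ≠ 0 → (0 < orient a b c ↔ 0 < orient (f a) (f b) (f c))
  nonvertical : ∀ a ∈ grid m, ∀ b ∈ grid m, a ≠ b → a.1 ≠ b.1 →
    IsHorton ((gridLine m a b).image f)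
  vertical : ∀ a ∈ grid m, ∀ b ∈ grid m, a ≠ b → a.1 = b.1 →
    IsHorton (((gridLine m a b).image f).image rotCW)

/-- A finite point set is in convex position. -/
def ConvexPos (S : Finset (ℝ × ℝ)) : Prop :=
  ∀ x ∈ S, x ∉ convexHull ℝ ((↑S : Set (ℝ × ℝ)) \ {x})

/-- A `◊`-squared Horton set with parameters `m` and `k`: each point `p` of an underlying
squared Horton set of `m = r²` points (the set `(grid r).image f`) is replaced by a small
`◊`-set `D p` of `k` points, consisting of four slightly concave circular arcs with at
least `⌊k/4⌋` points each, subject to the orientation and convexity properties (1)–(4).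
The resulting point set is `((grid r).image f).biUnion D`, of `n = k·m` points. -/
structure DiamondSquaredHorton (m k : ℕ) where
  /-- `√m`. -/
  r : ℕ
  hm : m = r ^ 2
  /-- perturbation parameter of the underlying squared Horton set -/
  ε : ℝ
  /-- perturbation map of the underlying squared Horton set -/
  f : ℝ × ℝ → ℝ × ℝ
  sqH : IsSquaredHorton r ε f
  /-- the `◊` replacing each point of the underlying squared Horton set -/
  D : ℝ × ℝ → Finset (ℝ × ℝ)
  /-- the four arcs of each `◊` -/
  arc : ℝ × ℝ → Fin 4 → Finset (ℝ × ℝ)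
  card_D : ∀ p ∈ (grid r).image f, (D p).card = k
  disj : ∀ p ∈ (grid r).image f, ∀ q ∈ (grid r).image f, p ≠ q → Disjoint (D p) (D q)
  arc_union : ∀ p ∈ (grid r).image f, D p = arc p 0 ∪ arc p 1 ∪ arc p 2 ∪ arc p 3
  arc_card : ∀ p ∈ (grid r).image f, ∀ i : Fin 4, k / 4 ≤ (arc p i).card
  /-- each arc lies on a circle -/
  arc_circle : ∀ p ∈ (grid r).image f, ∀ i : Fin 4,
    ∃ (o : ℝ × ℝ) (ρ : ℝ), ∀ x ∈ arc p i, elen x o = ρ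
  /-- property (1): triples of points from three different `◊`s have the same orientation
  as the corresponding triple of points of the underlying squared Horton set -/
  orient_pres : ∀ pi ∈ (grid r).image f, ∀ pj ∈ (grid r).image f, ∀ pl ∈ (grid r).image f,
    pi ≠ pj → pi ≠ pl → pj ≠ pl →
    ∀ qi ∈ D pi, ∀ qj ∈ D pj, ∀ ql ∈ D pl,
      orient qi qj ql ≠ 0 ∧ (0 < orient pi pj pl ↔ 0 < orient qi qj ql)
  /-- property (2): any two distinct `◊`s have a pair of arcs in convex position whose
  convex hull contains no further point of the whole set -/
  convex_arcs : ∀ p ∈ (grid r).image f, ∀ q ∈ (grid r).image f, p ≠ q →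
    ∃ i j : Fin 4, ConvexPos (arc p i ∪ arc q j) ∧
      ∀ x ∈ ((grid r).image f).biUnion D,
        x ∈ convexHull ℝ (↑(arc p i ∪ arc q j) : Set (ℝ × ℝ)) → x ∈ arc p i ∪ arc q j
  /-- property (3) -/
  five_prop : ∀ a ∈ (grid r).image f, ∀ b ∈ (grid r).image f, ∀ c ∈ (grid r).image f,
    ∀ d ∈ (grid r).image f, ∀ e ∈ (grid r).image f,
    a ≠ b → a ≠ c → a ≠ d → a ≠ e → b ≠ c → b ≠ d → b ≠ e → c ≠ d → c ≠ e → d ≠ e →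
    convexHull ℝ (↑(D a ∪ D b) : Set (ℝ × ℝ)) ∩
        convexHull ℝ (↑(D a ∪ D c) : Set (ℝ × ℝ)) ∩
        convexHull ℝ (↑(D d ∪ D e) : Set (ℝ × ℝ)) = ∅
  /-- property (4) -/
  six_prop : ∀ a ∈ (grid r).image f, ∀ b ∈ (grid r).image f, ∀ c ∈ (grid r).image f,
    ∀ d ∈ (grid r).image f, ∀ e ∈ (grid r).image f, ∀ g ∈ (grid r).image f,
    a ≠ b → a ≠ c → a ≠ d → a ≠ e → a ≠ g → b ≠ c → b ≠ d → b ≠ e → b ≠ g →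
    c ≠ d → c ≠ e → c ≠ g → d ≠ e → d ≠ g → e ≠ g →
    convexHull ℝ (↑(D a ∪ D b) : Set (ℝ × ℝ)) ∩
        convexHull ℝ (↑(D c ∪ D d) : Set (ℝ × ℝ)) ∩
        convexHull ℝ (↑(D e ∪ D g) : Set (ℝ × ℝ)) = ∅

/-- The point set of a `◊`-squared Horton set. -/
def DiamondSquaredHorton.pts {m k : ℕ} (c : DiamondSquaredHorton m k) : Finset (ℝ × ℝ) :=
  ((grid c.r).image c.f).biUnion c.D

/-!
Choosing one point from every `◊` places the integer grid in the plane so that orientations are kept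
and every lattice line becomes a Horton set. In an empty triangle of such a placement, the vertex
opposite the edge of largest lattice length has height at most two over the lattice line of that
edge, and the edge joins the terms `k` and `k + 2 ^ t` of a dyadic subsequence of the line, where
`2 ^ t` divides `k` or `k + 1`. Call the direction of the line, `t`, the depth of the subsequence,
and the height and side of the apex the shape of the triangle. Triangles of equal shape and apex
have disjoint interiors, and if a point stabs two triangles of equal shape, then their apices lie in
a strip of bounded width parallel to the base. Such a strip in direction `v` has `O(r / |v|)` grid
points; there are `O(j)` directions with `|v| = j`, and only those with `j < r / 2 ^ (t + u)` leave
room for the base at depth `u`. Hence a point stabs at most `∑_{t,u} O(r) * r / 2 ^ (t + u) = O(r²)`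
empty triangles of the placement, and the same count bounds those with a given vertex.

By property (4) there are at most four `◊`s that meet every pair of `◊`s whose convex hull contains
the stabbing point `s`. The vertices of a stabbed empty triangle lie in a single `◊`, or in two, one
of which is among these four, or in three. In the last case their `◊`s form an empty triangle of the
placement, and if none of them is among the four, moving the vertices within the `◊`s never sweeps
an edge over `s`, so `s` stabs that triangle too. Thus `O(r²)` sets of at most three `◊`s contain
all stabbed empty triangles, and each of them contains at most `(3k)³` triangles.
-/

/-! ### Orientation and triangles -/

/-- The sign encoded by a Boolean, so that the two orientations of a triple of points, and the two
halves of a Horton set, can be treated uniformly. -/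
def side (σ : Bool) : ℤ := if σ then 1 else -1

theorem side_not (σ : Bool) : side (!σ) = -side σ := by cases σ <;> rfl

theorem side_mul_self (σ : Bool) : side σ * side σ = 1 := by cases σ <;> rfl

/-- The point `c` lies strictly on side `σ` of the line through `a` and `b` directed from `a` to
`b`; `true` stands for the left side. -/
def OnSide (σ : Bool) (a b c : ℝ × ℝ) : Prop := 0 < (side σ : ℝ) * orient a b c

/-- The point `s` lies in the open triangle with vertices `a`, `b`, `c`, which are in
counterclockwise order if `σ = true` and in clockwise order if `σ = false`. -/
def InTriangle (σ : Bool) (a b c s : ℝ × ℝ) : Prop :=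
  OnSide σ a b s ∧ OnSide σ b c s ∧ OnSide σ c a s

theorem orient_rotate (a b c : ℝ × ℝ) : orient b c a = orient a b c := by
  unfold orient; ring

theorem orient_swap (a b c : ℝ × ℝ) : orient b a c = -orient a b c := by
  unfold orient; ring

theorem orient_eq_zero_of_collinear {a b c : ℝ × ℝ} (h : Collinear ℝ {a, b, c}) :
    orient a b c = 0 := by
  obtain ⟨v, hv⟩ := (collinear_iff_of_mem (p₀ := a) (by simp)).1 h
  obtain ⟨x, rfl⟩ := hv b (by simp)
  obtain ⟨y, rfl⟩ := hv c (by simp)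
  simp [orient]
  ring

namespace OnSide

variable {σ : Bool} {a b c s : ℝ × ℝ}

theorem true_iff : OnSide true a b c ↔ 0 < orient a b c := by simp [OnSide, side]

theorem false_iff : OnSide false a b c ↔ orient a b c < 0 := by simp [OnSide, side]

theorem rotate (h : OnSide σ a b c) : OnSide σ b c a := by
  rwa [OnSide, orient_rotate]

theorem swap (h : OnSide σ a b c) : OnSide (!σ) b a c := by
  rw [OnSide, orient_swap, side_not]
  simpa [OnSide] using h

theorem swap_right (h : OnSide σ a b c) : OnSide (!σ) a c b :=
  h.rotate.rotate.swap

theorem orient_ne_zero (h : OnSide σ a b c) : orient a b c ≠ 0 :=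
  right_ne_zero_of_mul (ne_of_gt h)

theorem not_not_side (h : OnSide σ a b c) : ¬OnSide (!σ) a b c := by
  intro h'
  simp only [OnSide, side_not, Int.cast_neg, neg_mul] at h h'
  linarith

theorem ne (h : OnSide σ a b c) : a ≠ b := by
  rintro rfl
  exact h.orient_ne_zero (by simp [orient])

end OnSide

theorem InTriangle.rotate {σ : Bool} {a b c s : ℝ × ℝ} (h : InTriangle σ a b c s) :
    InTriangle σ b c a s :=
  ⟨h.2.1, h.2.2, h.1⟩

theorem mem_of_sum_smul_eq {S : Set (ℝ × ℝ)} (hS : Convex ℝ S) {a b c s : ℝ × ℝ} (ha : a ∈ S)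
    (hb : b ∈ S) (hc : c ∈ S) {x y z : ℝ} (hx : 0 ≤ x) (hy : 0 ≤ y) (hz : 0 ≤ z)
    (hpos : 0 < x + y + z) (h : (x + y + z) • s = x • a + y • b + z • c) : s ∈ S := by
  have hmem : Finset.univ.centerMass ![x, y, z] ![a, b, c] ∈ S :=
    hS.centerMass_mem (by simp [Fin.forall_fin_succ, hx, hy, hz])
      (by simpa [Fin.sum_univ_three] using hpos) (by simp [Fin.forall_fin_succ, ha, hb, hc])
  have hsum : Finset.univ.centerMass ![x, y, z] ![a, b, c] =
      (x + y + z)⁻¹ • (x • a + y • b + z • c) := by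
    simp [Finset.centerMass, Fin.sum_univ_three]
  rwa [hsum, ← h, inv_smul_smul₀ hpos.ne'] at hmem

theorem sum_orient_smul (a b c s : ℝ × ℝ) :
    (orient b c s + orient c a s + orient a b s) • s =
      orient b c s • a + orient c a s • b + orient a b s • c := by
  ext <;> simp [orient] <;> ring

theorem sum_side_orient_smul (σ : Bool) (a b c s : ℝ × ℝ) :
    (side σ * orient b c s + side σ * orient c a s + side σ * orient a b s) • s =
      (side σ * orient b c s) • a + (side σ * orient c a s) • b + (side σ * orient a b s) • c := by
  simp only [← mul_add, mul_smul, sum_orient_smul, smul_add]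

theorem InTriangle.onSide {σ : Bool} {a b c s : ℝ × ℝ} (h : InTriangle σ a b c s) :
    OnSide σ a b c := by
  obtain ⟨hab, hbc, hca⟩ := h
  have hsum : orient a b c = orient a b s + orient b c s + orient c a s := by unfold orient; ring
  simp only [OnSide] at *
  rw [hsum, mul_add, mul_add]
  positivity

theorem orient_smul_add_smul (p q x y : ℝ × ℝ) {α β : ℝ} (h : α + β = 1) :
    orient p q (α • x + β • y) = α * orient p q x + β * orient p q y := by
  obtain rfl : β = 1 - α := by linarith
  simp [orient]
  ring

theorem convex_setOf_side_mul_orient_nonneg (σ : Bool) (p q : ℝ × ℝ) :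
    Convex ℝ {x | 0 ≤ (side σ : ℝ) * orient p q x} := by
  intro x hx y hy α β hα hβ h
  simp only [Set.mem_ofPred_eq] at *
  rw [orient_smul_add_smul p q x y h]
  nlinarith [mul_nonneg hα hx, mul_nonneg hβ hy]

theorem interior_setOf_side_mul_orient_nonneg (σ : Bool) {p q : ℝ × ℝ} (h : p ≠ q) :
    interior {x | 0 ≤ (side σ : ℝ) * orient p q x} = {x | OnSide σ p q x} := by
  have hσ : (side σ : ℝ) ≠ 0 := by cases σ <;> simp [side]
  let L : ℝ × ℝ →L[ℝ] ℝ := (side σ : ℝ) • ((q.1 - p.1) • ContinuousLinearMap.snd ℝ ℝ ℝ -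
    (q.2 - p.2) • ContinuousLinearMap.fst ℝ ℝ ℝ)
  have hL : ∀ x, (side σ : ℝ) * orient p q x = L (x - p) := fun x => by simp [L, orient]
  have hne : L ≠ 0 := fun h0 => h <| by
    have h1 := congr($h0 (1, 0))
    have h2 := congr($h0 (0, 1))
    refine Prod.ext (sub_eq_zero.1 ?_).symm (sub_eq_zero.1 ?_).symm
    · simpa [L, hσ] using h2
    · simpa [L, hσ, sub_eq_zero, eq_comm] using h1
  have hopen : IsOpenMap fun x => L (x - p) :=
    (L.isOpenMap_of_ne_zero hne).comp (Homeomorph.subRight p).isOpenMap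
  have hcont : Continuous fun x => L (x - p) := by fun_prop
  simp only [OnSide, hL]
  have hint := hopen.preimage_interior_eq_interior_preimage hcont (Set.Ici 0)
  rw [interior_Ici] at hint
  exact hint.symm

theorem convexHull_triangle {σ : Bool} {a b c : ℝ × ℝ} (h : OnSide σ a b c) :
    convexHull ℝ {a, b, c} = {x | 0 ≤ (side σ : ℝ) * orient a b x} ∩
      ({x | 0 ≤ (side σ : ℝ) * orient b c x} ∩ {x | 0 ≤ (side σ : ℝ) * orient c a x}) := by
  have hbca := h.rotate
  have hcab := hbca.rotate
  simp only [OnSide] at h hbca hcab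
  refine (convexHull_min ?_ ?_).antisymm fun s hs => ?_
  · have h0 (p q : ℝ × ℝ) : orient p q p = 0 ∧ orient p q q = 0 := by
      simp [orient, mul_comm]
    simp [Set.insert_subset_iff, h0, h.le, hbca.le, hcab.le]
  · exact (convex_setOf_side_mul_orient_nonneg σ a b).inter
      ((convex_setOf_side_mul_orient_nonneg σ b c).inter
        (convex_setOf_side_mul_orient_nonneg σ c a))
  · have hsum : (side σ : ℝ) * orient a b c = side σ * orient b c s + side σ * orient c a s +
        side σ * orient a b s := by unfold orient; ring
    exact mem_of_sum_smul_eq (convex_convexHull ℝ _) (subset_convexHull ℝ _ (by simp))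
      (subset_convexHull ℝ _ (by simp)) (subset_convexHull ℝ _ (by simp)) hs.2.1 hs.2.2 hs.1
      (hsum ▸ h) (sum_side_orient_smul σ a b c s)

theorem mem_interior_convexHull_iff {σ : Bool} {a b c s : ℝ × ℝ} (h : OnSide σ a b c) :
    s ∈ interior (convexHull ℝ {a, b, c}) ↔ InTriangle σ a b c s := by
  rw [convexHull_triangle h, interior_inter, interior_inter,
    interior_setOf_side_mul_orient_nonneg σ h.ne,
    interior_setOf_side_mul_orient_nonneg σ h.rotate.ne,
    interior_setOf_side_mul_orient_nonneg σ h.rotate.rotate.ne]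
  rfl

theorem InTriangle.mem_interior {σ : Bool} {a b c s : ℝ × ℝ} (h : InTriangle σ a b c s) :
    s ∈ interior (convexHull ℝ {a, b, c}) :=
  (mem_interior_convexHull_iff h.onSide).2 h

/-- While `x` moves to `x'` along a segment, the triangle can lose `s` only through one of the
sides `xy` and `xz`, which stay in `A` and in `B`, respectively. -/
theorem InTriangle.move_vertex {σ : Bool} {A B : Set (ℝ × ℝ)} (hA : Convex ℝ A)
    (hB : Convex ℝ B) {x x' y z s : ℝ × ℝ} (hx : x ∈ A ∩ B) (hx' : x' ∈ A ∩ B) (hy : y ∈ A)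
    (hz : z ∈ B) (hsA : s ∉ A) (hsB : s ∉ B) (h : InTriangle σ x y z s) :
    InTriangle σ x' y z s := by
  obtain ⟨hxy, hyz, hzx⟩ := h
  let path (τ : ℝ) : ℝ × ℝ := AffineMap.lineMap x x' τ
  let sideXY (τ : ℝ) : ℝ := side σ * orient (path τ) y s
  let sideZX (τ : ℝ) : ℝ := side σ * orient z (path τ) s
  have hpath (τ) (hτ : τ ∈ Set.Icc (0 : ℝ) 1) : path τ ∈ A ∩ B :=
    (hA.inter hB).lineMap_mem hx hx' hτ
  have hcont : Continuous fun τ => min (sideXY τ) (sideZX τ) := by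
    simp only [sideXY, sideZX, path, orient, AffineMap.lineMap_apply]
    fun_prop
  by_contra hcon
  have hend : min (sideXY 1) (sideZX 1) ≤ 0 := by
    by_contra! hlt
    rw [lt_min_iff] at hlt
    simp only [sideXY, sideZX, path, AffineMap.lineMap_apply_one] at hlt
    exact hcon ⟨hlt.1, hyz, hlt.2⟩
  have hbegin : 0 ≤ min (sideXY 0) (sideZX 0) := by
    simpa [sideXY, sideZX, path] using ⟨hxy.le, hzx.le⟩
  obtain ⟨τ, hτ, hzero⟩ := intermediate_value_Icc' zero_le_one hcont.continuousOn ⟨hend, hbegin⟩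
  have hxy' : 0 ≤ sideXY τ := hzero.ge.trans (min_le_left _ _)
  have hzx' : 0 ≤ sideZX τ := hzero.ge.trans (min_le_right _ _)
  have hsum := sum_side_orient_smul σ (path τ) y z s
  have hpos : 0 < side σ * orient y z s + sideZX τ + sideXY τ := by
    simp only [OnSide] at hyz
    linarith
  rcases min_choice (sideXY τ) (sideZX τ) with hmin | hmin
  · have h0 : side σ * orient (path τ) y s = 0 := hmin.symm.trans hzero
    refine hsA (mem_of_sum_smul_eq hA (hpath τ hτ).1 hy hy hyz.le hzx' hxy' hpos ?_)
    simpa [h0, sideXY, sideZX] using hsum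
  · have h0 : side σ * orient z (path τ) s = 0 := hmin.symm.trans hzero
    refine hsB (mem_of_sum_smul_eq hB (hpath τ hτ).2 hz hz hyz.le hzx' hxy' hpos ?_)
    simpa [h0, sideXY, sideZX] using hsum

theorem InTriangle.move_vertices {σ : Bool} {X Y Z : Set (ℝ × ℝ)} {x x' y y' z z' s : ℝ × ℝ}
    (hx : x ∈ X) (hx' : x' ∈ X) (hy : y ∈ Y) (hy' : y' ∈ Y) (hz : z ∈ Z) (hz' : z' ∈ Z)
    (hXY : s ∉ convexHull ℝ (X ∪ Y)) (hYZ : s ∉ convexHull ℝ (Y ∪ Z))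
    (hZX : s ∉ convexHull ℝ (Z ∪ X)) (h : InTriangle σ x y z s) : InTriangle σ x' y' z' s := by
  have hl {U V : Set (ℝ × ℝ)} {p} (hp : p ∈ U) : p ∈ convexHull ℝ (U ∪ V) :=
    subset_convexHull ℝ _ (Or.inl hp)
  have hr {U V : Set (ℝ × ℝ)} {p} (hp : p ∈ V) : p ∈ convexHull ℝ (U ∪ V) :=
    subset_convexHull ℝ _ (Or.inr hp)
  have hconv (U : Set (ℝ × ℝ)) := convex_convexHull ℝ U
  have h1 : InTriangle σ x' y z s :=
    h.move_vertex (hconv _) (hconv _) ⟨hl hx, hr hx⟩ ⟨hl hx', hr hx'⟩ (hr hy) (hl hz) hXY hZX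
  have h2 : InTriangle σ y' z x' s :=
    h1.rotate.move_vertex (hconv _) (hconv _) ⟨hl hy, hr hy⟩ ⟨hl hy', hr hy'⟩ (hr hz) (hl hx')
      hYZ hXY
  exact (h2.rotate.move_vertex (hconv _) (hconv _) ⟨hl hz, hr hz⟩ ⟨hl hz', hr hz'⟩ (hr hx')
    (hl hy') hZX hYZ).rotate

theorem InTriangle.onSide_of_vertices {σ τ : Bool} {a b c p q s : ℝ × ℝ} (h : InTriangle σ a b c s)
    (hpq : p ≠ q) (ha : 0 ≤ (side τ : ℝ) * orient p q a) (hb : 0 ≤ (side τ : ℝ) * orient p q b)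
    (hc : 0 ≤ (side τ : ℝ) * orient p q c) : OnSide τ p q s := by
  have hsub : convexHull ℝ {a, b, c} ⊆ {x | 0 ≤ (side τ : ℝ) * orient p q x} :=
    convexHull_min (by simp [Set.insert_subset_iff, ha, hb, hc])
      (convex_setOf_side_mul_orient_nonneg τ p q)
  have hs := interior_mono hsub h.mem_interior
  rwa [interior_setOf_side_mul_orient_nonneg τ hpq] at hs

/-! ### Horton sequences -/

theorem exists_eq_two_mul_add_toNat (i : ℕ) : ∃ (e : Bool) (x : ℕ), i = 2 * x + e.toNat :=
  i.even_or_odd.elim (fun ⟨x, hx⟩ => ⟨false, x, by simp; omega⟩) fun ⟨x, hx⟩ =>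
    ⟨true, x, by simpa using hx⟩

/-- A Horton set of `n` points listed from left to right: the `i`-th point is `P i` for `i < n`.
The Boolean `e` selects one of the two halves of the set, namely the points whose index has the
parity of `e`; each half lies on the prescribed side of all lines spanned by the other one. -/
inductive HortonSeq : ℕ → (ℕ → ℝ × ℝ) → Prop
  | small (n : ℕ) (P : ℕ → ℝ × ℝ) (h : n ≤ 2) : HortonSeq n P
  | split (n : ℕ) (P : ℕ → ℝ × ℝ)
      (half : ∀ e : Bool, HortonSeq ((n + 1 - e.toNat) / 2) fun i => P (2 * i + e.toNat))
      (apart : ∀ (e : Bool) (x y z : ℕ), x < y → 2 * y + e.toNat < n → 2 * z + (!e).toNat < n →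
        OnSide (!e) (P (2 * x + e.toNat)) (P (2 * y + e.toNat)) (P (2 * z + (!e).toNat))) :
      HortonSeq n P

theorem HortonSeq.congr {n : ℕ} {P Q : ℕ → ℝ × ℝ} (h : HortonSeq n P)
    (hPQ : ∀ σ, ∀ x < n, ∀ y < n, ∀ z < n, x ≠ y → y ≠ z → z ≠ x →
      OnSide σ (P x) (P y) (P z) → OnSide σ (Q x) (Q y) (Q z)) : HortonSeq n Q := by
  induction h generalizing Q with
  | small n P h => exact .small _ _ h
  | split n P _ apart ih =>
    have hlt (e : Bool) (x : ℕ) (hx : x < (n + 1 - e.toNat) / 2) : 2 * x + e.toNat < n := by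
      omega
    refine .split _ _ (fun e => ih e fun σ x hx y hy z hz hxy hyz hzx => ?_)
      fun e x y z hxy hy hz => ?_
    · exact hPQ σ _ (hlt e x hx) _ (hlt e y hy) _ (hlt e z hz) (by omega) (by omega) (by omega)
    · refine hPQ _ _ (by omega) _ hy _ hz (by omega) ?_ ?_ (apart e x y z hxy hy hz) <;>
        cases e <;> simp <;> omega

/-- Unless `l = i + 1`, both points lie in the half `σ`: a neighbour of a point of the other half
would be a point of the half `σ` on side `σ` of the two. -/
theorem HortonSeq.exists_eq_add_two_pow {n : ℕ} {P : ℕ → ℝ × ℝ} (h : HortonSeq n P) {σ : Bool}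
    {i l : ℕ} (hil : i < l) (hln : l < n)
    (hvis : ∀ j, i < j → j < l → ¬OnSide σ (P i) (P l) (P j)) :
    ∃ t, l = i + 2 ^ t ∧ 2 ^ t ∣ i + σ.toNat := by
  induction h generalizing i l with
  | small n P h => exact ⟨0, by simp; omega, by simp⟩
  | split n P half apart ih =>
    by_cases hl : l = i + 1
    · exact ⟨0, by simp [hl], by simp⟩
    obtain ⟨e, x, rfl⟩ := exists_eq_two_mul_add_toNat i
    obtain ⟨e', y, rfl⟩ := exists_eq_two_mul_add_toNat l
    have he := e.toNat_lt
    have hsucc (e : Bool) (x : ℕ) : 2 * x + e.toNat + 1 = 2 * (x + e.toNat) + (!e).toNat := by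
      cases e <;> simp
      omega
    obtain rfl | rfl : e = e' ∨ e' = !e := by cases e <;> cases e' <;> simp
    all_goals obtain rfl | rfl : σ = e ∨ σ = !e := by cases e <;> cases σ <;> simp
    · obtain ⟨t, rfl, hdvd⟩ := ih σ (by omega) (by omega) fun j hxj hjy =>
        hvis _ (by omega) (by omega)
      refine ⟨t + 1, by ring, ?_⟩
      rw [pow_succ', show 2 * x + σ.toNat + σ.toNat = 2 * (x + σ.toNat) by ring]
      exact mul_dvd_mul_left 2 hdvd
    · refine absurd ?_ (hvis (2 * x + e.toNat + 1) (by omega) (by omega))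
      rw [hsucc]
      exact apart e x y _ (by omega) hln (hsucc e x ▸ by omega)
    · obtain ⟨z, rfl⟩ : ∃ z, y = z + σ.toNat := ⟨y - σ.toNat, by cases σ <;> simp at *; omega⟩
      rw [← hsucc] at hil hln hl hvis
      have := (apart σ x z (z + σ.toNat) (by omega) (by omega) (hsucc σ z ▸ hln)).swap_right
      rw [← hsucc, Bool.not_not] at this
      exact absurd this (hvis _ (by omega) (by omega))
    · have hxy : x + e.toNat < y := by
        have := hsucc e x
        omega
      have := (apart (!e) (x + e.toNat) y x hxy hln (by simp; omega)).rotate.rotate.swap_right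
      refine absurd ?_ (hvis (2 * x + e.toNat + 1) (by omega) (by omega))
      simpa [hsucc] using this

/-- The indices `ρ + 2 ^ u * x` form a subsequence of a Horton set of which every pair has the apex
`A` on its side `σ`, and the pair with `x = k` and `x = k + 2 ^ t` is one of those that, together
with `A`, can span an empty triangle. -/
structure DyadicFan (n : ℕ) (Q : ℕ → ℝ × ℝ) (A : ℝ × ℝ) (t u : ℕ) (σ : Bool) (ρ k : ℕ) :
    Prop where
  lt : ρ + 2 ^ u * (k + 2 ^ t) < n
  offset_lt : ρ < 2 ^ u
  dvd : 2 ^ t ∣ k + σ.toNat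
  onSide : ∀ x y, x < y → ρ + 2 ^ u * y < n → OnSide σ (Q (ρ + 2 ^ u * x)) (Q (ρ + 2 ^ u * y)) A

theorem DyadicFan.of_half {n : ℕ} {P : ℕ → ℝ × ℝ} {A : ℝ × ℝ} {t u : ℕ} {e σ : Bool} {ρ k : ℕ}
    (h : DyadicFan ((n + 1 - e.toNat) / 2) (fun i => P (2 * i + e.toNat)) A t u σ ρ k) :
    DyadicFan n P A t (u + 1) σ (2 * ρ + e.toNat) k := by
  have hidx (x : ℕ) : 2 * ρ + e.toNat + 2 ^ (u + 1) * x = 2 * (ρ + 2 ^ u * x) + e.toNat := by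
    ring
  have he := e.toNat_lt
  refine ⟨?_, ?_, h.dvd, fun x y hxy hy => ?_⟩
  · have := h.lt
    rw [hidx]
    omega
  · have := h.offset_lt
    rw [pow_succ']
    omega
  · rw [hidx] at hy
    rw [hidx, hidx]
    exact h.onSide x y hxy (by omega)

theorem HortonSeq.exists_dyadicFan_zero {n : ℕ} {P : ℕ → ℝ × ℝ} (h : HortonSeq n P) {σ : Bool}
    {A : ℝ × ℝ} (hA : ∀ x y, x < y → y < n → OnSide σ (P x) (P y) A) {i l : ℕ} (hil : i < l)
    (hln : l < n) (hempty : ∀ j < n, ¬InTriangle σ (P i) (P l) A (P j)) :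
    ∃ t, l = i + 2 ^ t ∧ DyadicFan n P A t 0 σ 0 i := by
  obtain ⟨t, rfl, hdvd⟩ := h.exists_eq_add_two_pow hil hln fun j hij hjl hside =>
    hempty j (by omega) ⟨hside, (hA j l hjl hln).rotate, (hA i j hij (by omega)).rotate.rotate⟩
  exact ⟨t, rfl, by simpa using hln, by simp, hdvd, by simpa using hA⟩

theorem exists_image_or_eq_triple_of_card_eq_three {T : Finset ℕ} (hT : T.card = 3) :
    (∃ (e : Bool) (T' : Finset ℕ), T = T'.image fun x => 2 * x + e.toNat) ∨
      ∃ (e : Bool) (x y z : ℕ), x < y ∧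
        T = {2 * z + (!e).toNat, 2 * x + e.toNat, 2 * y + e.toNat} := by
  have hpair {e : Bool} {x y : ℕ} (z : ℕ) (hxy : 2 * x + e.toNat ≠ 2 * y + e.toNat)
      (hTxy : T = {2 * z + (!e).toNat, 2 * x + e.toNat, 2 * y + e.toNat}) :
      ∃ (e : Bool) (x y z : ℕ), x < y ∧
        T = {2 * z + (!e).toNat, 2 * x + e.toNat, 2 * y + e.toNat} := by
    rcases lt_or_gt_of_ne fun h : x = y => hxy (h ▸ rfl) with h | h
    · exact ⟨e, x, y, z, h, hTxy⟩
    · exact ⟨e, y, x, z, h, by rw [hTxy, Finset.pair_comm]⟩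
  have hcases (e e' : Bool) : e = e' ∨ e' = !e := by cases e <;> cases e' <;> simp
  obtain ⟨i, j, l, hij, hil, hjl, hTijl⟩ := Finset.card_eq_three.1 hT
  obtain ⟨e, x, rfl⟩ := exists_eq_two_mul_add_toNat i
  obtain ⟨e', y, rfl⟩ := exists_eq_two_mul_add_toNat j
  obtain ⟨e'', z, rfl⟩ := exists_eq_two_mul_add_toNat l
  obtain rfl | rfl := hcases e e' <;> obtain rfl | rfl := hcases e e''
  · exact .inl ⟨e, {x, y, z}, by simpa using hTijl⟩
  · exact .inr (hpair z hij (by rw [hTijl]; ext; simp; tauto))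
  · exact .inr (hpair y hil (by rw [hTijl]; ext; simp; tauto))
  · exact .inr (hpair x hjl (by simpa using hTijl))

/-- Pass to halves as long as one of them contains all vertices, which happens `u` times; then two
vertices share a half, and all pairs of that half have the third vertex on the same side. -/
theorem HortonSeq.exists_dyadicFan {n : ℕ} {P : ℕ → ℝ × ℝ} (h : HortonSeq n P) {T : Finset ℕ}
    (hTn : ∀ i ∈ T, i < n) (hT : T.card = 3)
    (hempty : ∀ j < n, P j ∉ interior (convexHull ℝ (P '' T))) :
    ∃ (t u : ℕ) (σ : Bool) (ρ k α : ℕ), α < n ∧ DyadicFan n P (P α) t (u + 1) σ ρ k ∧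
      ρ ≡ α + 2 ^ u [MOD 2 ^ (u + 1)] ∧
      T = {α, ρ + 2 ^ (u + 1) * k, ρ + 2 ^ (u + 1) * (k + 2 ^ t)} := by
  induction h generalizing T with
  | small n P h =>
    have : T ⊆ Finset.range n := fun i hi => Finset.mem_range.2 (hTn i hi)
    have := Finset.card_le_card this
    simp at this
    omega
  | split n P half apart ih =>
    rcases exists_image_or_eq_triple_of_card_eq_three hT with
      ⟨e, T, rfl⟩ | ⟨e, x, y, z, hxy, rfl⟩
    · have hlt (x : ℕ) (hx : x ∈ T) := hTn _ (Finset.mem_image_of_mem _ hx)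
      obtain ⟨t, u, σ, ρ, k, α, hα, hfan, hmod, rfl⟩ := ih e (T := T)
        (fun x hx => by have := hlt x hx; omega)
        (by rwa [Finset.card_image_of_injective _ fun x y hxy => by simpa using hxy] at hT)
        (fun j hj => by simpa [Set.image_image] using hempty (2 * j + e.toNat) (by omega))
      refine ⟨t, u + 1, σ, 2 * ρ + e.toNat, k, 2 * α + e.toNat, by omega, hfan.of_half, ?_, ?_⟩
      · have := (hmod.mul_left' 2).add_right e.toNat
        convert this using 1 <;> ring
      · simp only [Finset.image_insert, Finset.image_singleton]
        congr! 2
        · ring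
        · congr 1
          ring
    · have hx := hTn (2 * x + e.toNat) (by simp)
      have hy := hTn (2 * y + e.toNat) (by simp)
      have hz := hTn (2 * z + (!e).toNat) (by simp)
      obtain ⟨t, rfl, hfan⟩ := (half e).exists_dyadicFan_zero
        (fun x y hxy hy => apart e x y z hxy (by omega) hz) hxy (by omega) fun j hj hin => by
          refine hempty (2 * j + e.toNat) (by omega) ?_
          simpa [Set.image_insert_eq] using hin.rotate.rotate.mem_interior
      refine ⟨t, 0, !e, e.toNat, x, 2 * z + (!e).toNat, hz, by simpa using hfan.of_half, ?_, ?_⟩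
      · cases e <;> simp [Nat.ModEq]
        omega
      · congr! 2
        · ring
        · congr 1
          ring

theorem DyadicFan.add_two_pow_le {n : ℕ} {Q : ℕ → ℝ × ℝ} {A A' : ℝ × ℝ} {t u : ℕ} {σ : Bool}
    {ρ ρ' k k' : ℕ} (h : DyadicFan n Q A t u σ ρ k) (h' : DyadicFan n Q A' t u σ ρ' k')
    (hk : k < k') : k + 2 ^ t ≤ k' := by
  have hdvd : 2 ^ t ∣ k' - k := by
    have := Nat.dvd_sub h'.dvd h.dvd
    rwa [Nat.add_sub_add_right] at this
  have := Nat.le_of_dvd (by omega) hdvd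
  omega

/-- Distinct triangles of a fan are separated by a line through the apex. -/
theorem DyadicFan.base_unique {n : ℕ} {Q : ℕ → ℝ × ℝ} {A s : ℝ × ℝ} {t u : ℕ} {σ : Bool}
    {ρ k k' : ℕ} (h : DyadicFan n Q A t u σ ρ k) (h' : DyadicFan n Q A t u σ ρ k')
    (hs : InTriangle σ (Q (ρ + 2 ^ u * k)) (Q (ρ + 2 ^ u * (k + 2 ^ t))) A s)
    (hs' : InTriangle σ (Q (ρ + 2 ^ u * k')) (Q (ρ + 2 ^ u * (k' + 2 ^ t))) A s) : k = k' := by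
  wlog hlt : k < k' generalizing k k'
  · rcases (not_lt.1 hlt).eq_or_lt with heq | hlt
    · exact heq.symm
    · exact (this h' h hs' hs hlt).symm
  have hk' : ρ + 2 ^ u * k' < n :=
    lt_of_le_of_lt (by gcongr; exact Nat.le_add_right _ _) h'.lt
  have hside (x : ℕ) (hx : x ≤ k') :
      0 ≤ (side σ : ℝ) * orient (Q (ρ + 2 ^ u * k')) A (Q (ρ + 2 ^ u * x)) := by
    rcases hx.eq_or_lt with rfl | hx
    · simp [orient]
    · exact (h.onSide x k' hx hk').rotate.le
  have hline : Q (ρ + 2 ^ u * k') ≠ A := (h.onSide k k' hlt hk').rotate.ne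
  have hnear : OnSide σ (Q (ρ + 2 ^ u * k')) A s :=
    hs.onSide_of_vertices hline (hside k hlt.le) (hside _ (h.add_two_pow_le h' hlt))
      (by simp [orient, mul_comm])
  exact absurd hs'.2.2.swap hnear.not_not_side

section Rank

variable {n : ℕ} {P : ℕ → ℝ × ℝ}

theorem card_filter_fst_lt (hP : StrictMonoOn (fun i => (P i).1) (Set.Iio n)) {i : ℕ} (hi : i < n) :
    (((Finset.range n).image P).filter fun q => q.1 < (P i).1).card = i := by
  have hfilter : (((Finset.range n).image P).filter fun q => q.1 < (P i).1) =
      (Finset.range i).image P := by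
    ext q
    simp only [Finset.mem_filter, Finset.mem_image, Finset.mem_range]
    constructor
    · rintro ⟨⟨j, hj, rfl⟩, hlt⟩
      exact ⟨j, (hP.lt_iff_lt hj hi).1 hlt, rfl⟩
    · rintro ⟨j, hj, rfl⟩
      exact ⟨⟨j, hj.trans hi, rfl⟩, hP (hj.trans hi) hi hj⟩
  rw [hfilter, Finset.card_image_of_injOn, Finset.card_range]
  intro a ha b hb hab
  simp only [Finset.coe_range, Set.mem_Iio] at ha hb
  exact hP.injOn (ha.trans hi) (hb.trans hi) congr(($hab).1)

theorem filter_rank_image_range (hP : StrictMonoOn (fun i => (P i).1) (Set.Iio n)) (p : ℕ → Prop)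
    [DecidablePred p] :
    (((Finset.range n).image P).filter fun q =>
      p (((Finset.range n).image P).filter fun q' => q'.1 < q.1).card) =
      ((Finset.range n).filter p).image P := by
  ext q
  simp only [Finset.mem_filter, Finset.mem_image, Finset.mem_range]
  constructor
  · rintro ⟨⟨i, hi, rfl⟩, hp⟩
    exact ⟨i, ⟨hi, by rwa [card_filter_fst_lt hP hi] at hp⟩, rfl⟩
  · rintro ⟨i, ⟨hi, hp⟩, rfl⟩
    exact ⟨⟨i, hi, rfl⟩, by rwa [card_filter_fst_lt hP hi]⟩

theorem evenPart_image_range (hP : StrictMonoOn (fun i => (P i).1) (Set.Iio n)) :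
    evenPart ((Finset.range n).image P) =
      (Finset.range ((n + 1) / 2)).image fun i => P (2 * i) := by
  rw [evenPart, filter_rank_image_range hP Even]
  ext q
  simp only [Finset.mem_image, Finset.mem_filter, Finset.mem_range]
  constructor
  · rintro ⟨_, ⟨hi, i, rfl⟩, rfl⟩
    exact ⟨i, by omega, by rw [two_mul]⟩
  · rintro ⟨i, hi, rfl⟩
    exact ⟨2 * i, ⟨by omega, even_two_mul i⟩, rfl⟩

theorem oddPart_image_range (hP : StrictMonoOn (fun i => (P i).1) (Set.Iio n)) :
    oddPart ((Finset.range n).image P) = (Finset.range (n / 2)).image fun i => P (2 * i + 1) := by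
  rw [oddPart, filter_rank_image_range hP fun i => ¬Even i]
  ext q
  simp only [Finset.mem_image, Finset.mem_filter, Finset.mem_range, Nat.not_even_iff_odd]
  constructor
  · rintro ⟨_, ⟨hi, i, rfl⟩, rfl⟩
    exact ⟨i, by omega, rfl⟩
  · rintro ⟨i, hi, rfl⟩
    exact ⟨2 * i + 1, ⟨by omega, odd_two_mul_add_one i⟩, rfl⟩

end Rank

theorem hortonSeq_of_isHorton {H : Finset (ℝ × ℝ)} (h : IsHorton H) {n : ℕ} {P : ℕ → ℝ × ℝ}
    (hP : StrictMonoOn (fun i => (P i).1) (Set.Iio n)) (hH : H = (Finset.range n).image P) :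
    HortonSeq n P := by
  induction h generalizing n P with
  | small H _ _ hcard =>
    refine .small _ _ ?_
    rwa [hH, Finset.card_image_of_injOn, Finset.card_range] at hcard
    exact fun a ha b hb hab => hP.injOn (by simpa using ha) (by simpa using hb) congr(($hab).1)
  | split H _ _ _ _ _ hhigh hdeep iheven ihodd =>
    have hmono (e : Bool) : StrictMonoOn (fun i => (P (2 * i + e.toNat)).1)
        (Set.Iio ((n + 1 - e.toNat) / 2)) := fun i hi j hj hij => by
      simp only [Set.mem_Iio] at hi hj
      exact hP (by simp; omega) (by simp; omega) (by omega)
    have heven : evenPart H = _ := hH ▸ evenPart_image_range hP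
    have hodd : oddPart H = _ := hH ▸ oddPart_image_range hP
    have hmem_even (i : ℕ) (hi : 2 * i < n) : P (2 * i) ∈ evenPart H :=
      heven ▸ Finset.mem_image_of_mem (fun i => P (2 * i)) (Finset.mem_range.2 (by omega))
    have hmem_odd (i : ℕ) (hi : 2 * i + 1 < n) : P (2 * i + 1) ∈ oddPart H :=
      hodd ▸ Finset.mem_image_of_mem (fun i => P (2 * i + 1)) (Finset.mem_range.2 (by omega))
    refine .split _ _ (fun e => ?_) fun e x y z hxy hy hz => ?_
    · cases e
      · exact iheven (hmono false) heven
      · exact ihodd (hmono true) hodd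
    · have hlt := hP (by simp; omega) hy (show 2 * x + e.toNat < 2 * y + e.toNat by omega)
      cases e <;> simp only [Bool.toNat_true, Bool.toNat_false, Bool.not_true, Bool.not_false,
        OnSide.true_iff, OnSide.false_iff, add_zero] at *
      · have := hdeep _ (hmem_even x (by omega)) _ (hmem_even y hy) hlt _ (hmem_odd z hz)
        unfold StrictlyAbove at this
        unfold orient
        linarith
      · have := hhigh _ (hmem_odd x (by omega)) _ (hmem_odd y hy) hlt _ (hmem_even z hz)
        unfold StrictlyBelow at this
        unfold orient
        linarith

/-! ### The integer grid -/

/-- The grid `{1, …, r} × {1, …, r}` as a set of integer points. -/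
def latticeBox (r : ℕ) : Finset (ℤ × ℤ) := Finset.Icc 1 (r : ℤ) ×ˢ Finset.Icc 1 (r : ℤ)

/-- The determinant of two integer vectors. -/
def cross (v w : ℤ × ℤ) : ℤ := v.1 * w.2 - v.2 * w.1

/-- The sup norm of an integer vector. -/
def supNorm (v : ℤ × ℤ) : ℕ := max v.1.natAbs v.2.natAbs

/-- The lattice length of an integer vector: the number of primitive vectors it is made of. -/
def latticeLength (v : ℤ × ℤ) : ℕ := Int.gcd v.1 v.2

/-- A primitive integer vector is one whose coordinates are coprime. -/
def Primitive (v : ℤ × ℤ) : Prop := IsCoprime v.1 v.2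

/-- A vector is rightward if it points to the right or vertically upwards, so that every line has
exactly one rightward primitive direction. -/
def Rightward (v : ℤ × ℤ) : Prop := 0 < v.1 ∨ v.1 = 0 ∧ 0 < v.2

theorem mem_latticeBox {r : ℕ} {z : ℤ × ℤ} :
    z ∈ latticeBox r ↔ (1 ≤ z.1 ∧ z.1 ≤ r) ∧ 1 ≤ z.2 ∧ z.2 ≤ r := by
  simp [latticeBox]

theorem card_latticeBox (r : ℕ) : (latticeBox r).card = r ^ 2 := by
  simp [latticeBox, sq]

theorem Rightward.supNorm_pos {v : ℤ × ℤ} (hv : Rightward v) : 0 < supNorm v := by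
  unfold supNorm
  rcases hv with hv | hv <;> omega

theorem Primitive.exists_eq_zsmul {v w : ℤ × ℤ} (hv : Primitive v) (h : cross v w = 0) :
    ∃ n : ℤ, w = n • v := by
  obtain ⟨x, y, hxy⟩ := hv
  simp only [cross] at h
  refine ⟨x * w.1 + y * w.2, Prod.ext ?_ ?_⟩ <;>
    simp only [Prod.smul_fst, Prod.smul_snd, smul_eq_mul]
  · linear_combination w.1 * -hxy - y * h
  · linear_combination w.2 * -hxy + x * h

theorem exists_primitive_rightward {a b : ℤ × ℤ} (h : a ≠ b) :
    ∃ v, Primitive v ∧ Rightward v ∧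
      (b = a + (latticeLength (b - a) : ℤ) • v ∨ a = b + (latticeLength (b - a) : ℤ) • v) := by
  have hne : b - a ≠ 0 := sub_ne_zero.2 h.symm
  have hpos : 0 < latticeLength (b - a) :=
    Nat.pos_of_ne_zero fun h0 => hne (Prod.ext (Int.gcd_eq_zero_iff.1 h0).1
      (Int.gcd_eq_zero_iff.1 h0).2)
  obtain ⟨x, y, hcop, hx, hy⟩ := Int.exists_gcd_one hpos
  have hdir : b - a = (latticeLength (b - a) : ℤ) • (x, y) := by
    refine Prod.ext (hx.trans ?_) (hy.trans ?_) <;> simp [mul_comm, latticeLength]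
  have hcop' : IsCoprime x y := Int.isCoprime_iff_gcd_eq_one.2 hcop
  by_cases hright : Rightward (x, y)
  · exact ⟨(x, y), hcop', hright, .inl (eq_add_of_sub_eq' hdir)⟩
  · refine ⟨-(x, y), hcop'.neg_neg, ?_, .inr ?_⟩
    · have hxy : x ≠ 0 ∨ y ≠ 0 := by
        by_contra! h0
        simp [h0.1, h0.2] at hcop
      simp only [Rightward, Prod.neg_mk] at hright ⊢
      omega
    · rw [smul_neg, ← hdir]
      abel

section Box

variable {r : ℕ} {a v : ℤ × ℤ}

theorem add_zsmul_mem_latticeBox {i j n : ℤ} (hi : a + i • v ∈ latticeBox r)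
    (hj : a + j • v ∈ latticeBox r) (hin : i ≤ n) (hnj : n ≤ j) : a + n • v ∈ latticeBox r := by
  have hbetween (x : ℤ) : x * n ≤ max (x * i) (x * j) ∧ min (x * i) (x * j) ≤ x * n := by
    rcases le_total 0 x with hx | hx
    · exact ⟨le_max_of_le_right (mul_le_mul_of_nonneg_left hnj hx),
        min_le_of_left_le (mul_le_mul_of_nonneg_left hin hx)⟩
    · exact ⟨le_max_of_le_left (mul_le_mul_of_nonpos_left hin hx),
        min_le_of_right_le (mul_le_mul_of_nonpos_left hnj hx)⟩
  have h1 := hbetween v.1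
  have h2 := hbetween v.2
  simp only [mem_latticeBox, Prod.fst_add, Prod.snd_add, Prod.smul_fst, Prod.smul_snd, smul_eq_mul,
    mul_comm _ v.1, mul_comm _ v.2] at *
  omega

theorem natAbs_mul_supNorm_lt {n : ℤ} (ha : a ∈ latticeBox r) (h : a + n • v ∈ latticeBox r) :
    n.natAbs * supNorm v < r := by
  simp only [mem_latticeBox, Prod.fst_add, Prod.snd_add, Prod.smul_fst, Prod.smul_snd,
    smul_eq_mul] at *
  rcases max_choice v.1.natAbs v.2.natAbs with hmax | hmax <;>
    rw [supNorm, hmax, ← Int.natAbs_mul] <;> omega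

theorem mem_latticeBox_of_cross_pos {a b c d : ℤ × ℤ} (ha : a ∈ latticeBox r)
    (hb : b ∈ latticeBox r) (hc : c ∈ latticeBox r) {ε : ℤ} (hab : 0 < ε * cross (b - a) (d - a))
    (hbc : 0 < ε * cross (c - b) (d - b)) (hca : 0 < ε * cross (a - c) (d - c)) :
    d ∈ latticeBox r := by
  set α := ε * cross (c - b) (d - b) with hα
  set β := ε * cross (a - c) (d - c) with hβ
  set γ := ε * cross (b - a) (d - a) with hγ
  have h1 : (α + β + γ) * d.1 = α * a.1 + β * b.1 + γ * c.1 := by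
    simp only [hα, hβ, hγ, cross, Prod.fst_sub, Prod.snd_sub]
    ring
  have h2 : (α + β + γ) * d.2 = α * a.2 + β * b.2 + γ * c.2 := by
    simp only [hα, hβ, hγ, cross, Prod.fst_sub, Prod.snd_sub]
    ring
  have hmean {x y z w : ℤ} (h : (α + β + γ) * w = α * x + β * y + γ * z)
      (hx : 1 ≤ x ∧ x ≤ r) (hy : 1 ≤ y ∧ y ≤ r) (hz : 1 ≤ z ∧ z ≤ r) : 1 ≤ w ∧ w ≤ r := by
    constructor <;> refine le_of_mul_le_mul_left ?_ (by positivity : 0 < α + β + γ) <;> nlinarith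
  simp only [mem_latticeBox] at *
  exact ⟨hmean h1 ha.1 hb.1 hc.1, hmean h2 ha.2 hb.2 hc.2⟩

end Box

/-- A maximal row of equally spaced box points on a lattice line, with a rightward primitive step
`dir`; it starts at the first point of the line inside the box. -/
structure LatticeChord (r : ℕ) where
  start : ℤ × ℤ
  dir : ℤ × ℤ
  primitive : Primitive dir
  rightward : Rightward dir
  start_mem : start ∈ latticeBox r
  pred_notMem : start - dir ∉ latticeBox r

namespace LatticeChord

variable {r : ℕ} (γ : LatticeChord r)

/-- The points of the lattice line carrying the chord, numbered along the chord. -/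
def point (i : ℤ) : ℤ × ℤ := γ.start + i • γ.dir

/-- The signed height of a lattice point above the chord, in units in which consecutive parallel
lattice lines have distance one. -/
def height (z : ℤ × ℤ) : ℤ := cross γ.dir (z - γ.start)

theorem exists_point_notMem : ∃ n : ℕ, γ.point n ∉ latticeBox r := by
  refine ⟨r, fun h => (natAbs_mul_supNorm_lt γ.start_mem h).not_ge ?_⟩
  simpa using Nat.le_mul_of_pos_right r γ.rightward.supNorm_pos

/-- The number of box points on the chord. -/
def length : ℕ := Nat.find γ.exists_point_notMem

theorem point_zero : γ.point 0 = γ.start := by simp [point]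

theorem point_neg_one : γ.point (-1) = γ.start - γ.dir := by simp [point, sub_eq_add_neg]

theorem point_mem_iff {i : ℤ} : γ.point i ∈ latticeBox r ↔ 0 ≤ i ∧ i < γ.length := by
  have hzero : γ.point 0 ∈ latticeBox r := γ.point_zero ▸ γ.start_mem
  refine ⟨fun h => ⟨?_, ?_⟩, fun ⟨h0, hi⟩ => ?_⟩
  · by_contra! hi
    refine γ.pred_notMem (γ.point_neg_one ▸ ?_)
    exact add_zsmul_mem_latticeBox h hzero (by omega) (by omega)
  · by_contra! hi
    exact Nat.find_spec γ.exists_point_notMem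
      (add_zsmul_mem_latticeBox hzero h (Nat.cast_nonneg _) hi)
  · lift i to ℕ using h0
    exact not_not.1 (Nat.find_min γ.exists_point_notMem (Nat.cast_lt.1 hi))

theorem point_mem {i : ℕ} (hi : i < γ.length) : γ.point i ∈ latticeBox r :=
  γ.point_mem_iff.2 ⟨by positivity, by exact_mod_cast hi⟩

theorem lt_length {i : ℕ} (hi : γ.point i ∈ latticeBox r) : i < γ.length := by
  exact_mod_cast (γ.point_mem_iff.1 hi).2

theorem dir_ne_zero : γ.dir ≠ 0 := fun h => by
  have := γ.rightward
  simp [Rightward, h] at this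

theorem point_injective : Function.Injective γ.point := fun _ _ h =>
  smul_left_injective ℤ γ.dir_ne_zero (add_left_cancel h)

theorem height_point (i : ℤ) : γ.height (γ.point i) = 0 := by
  simp only [height, point, cross, add_sub_cancel_left, Prod.smul_fst, Prod.smul_snd, smul_eq_mul]
  ring

theorem exists_point_eq {z : ℤ × ℤ} (hz : z ∈ latticeBox r) (h : γ.height z = 0) :
    ∃ i : ℕ, i < γ.length ∧ γ.point i = z := by
  obtain ⟨n, hn⟩ := γ.primitive.exists_eq_zsmul h
  obtain rfl : z = γ.point n := by rw [point, ← hn, add_sub_cancel]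
  have hmem := γ.point_mem_iff.1 hz
  lift n to ℕ using hmem.1
  exact ⟨n, by exact_mod_cast hmem.2, rfl⟩

theorem exists_dir_eq {v b : ℤ × ℤ} (hv : Primitive v) (hright : Rightward v)
    (hb : b ∈ latticeBox r) : ∃ γ : LatticeChord r, γ.dir = v ∧ ∃ i : ℕ, γ.point i = b := by
  have hex : ∃ n : ℕ, b - (n : ℤ) • v ∉ latticeBox r := by
    refine ⟨r, fun h => ?_⟩
    rw [sub_eq_add_neg, ← neg_smul] at h
    refine (natAbs_mul_supNorm_lt hb h).not_ge ?_
    simpa using Nat.le_mul_of_pos_right r hright.supNorm_pos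
  obtain ⟨n, hn⟩ : ∃ n, Nat.find hex = n + 1 :=
    Nat.exists_eq_succ_of_ne_zero fun h0 => by simpa [h0, hb] using Nat.find_spec hex
  refine ⟨⟨b - (n : ℤ) • v, v, hv, hright, not_not.1 (Nat.find_min hex (by omega)), ?_⟩, rfl, n, ?_⟩
  · have := Nat.find_spec hex
    rwa [hn, Nat.cast_succ, add_smul, one_smul, ← sub_sub] at this
  · simp [point]

theorem eq_of_dir_eq_of_height_eq_zero {γ γ' : LatticeChord r} (hdir : γ.dir = γ'.dir)
    (h : γ.height γ'.start = 0) : γ = γ' := by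
  obtain ⟨i, hi, hstart⟩ := γ.exists_point_eq γ'.start_mem h
  have hpred : γ.point (i - 1) = γ'.start - γ'.dir := by
    rw [← hstart, ← hdir, point, point, sub_smul, one_smul, add_sub_assoc]
  have hnot := γ'.pred_notMem
  rw [← hpred, point_mem_iff] at hnot
  obtain rfl : i = 0 := by omega
  rw [Nat.cast_zero, point_zero] at hstart
  cases γ
  cases γ'
  simp_all

theorem height_sub_height (z z' : ℤ × ℤ) :
    γ.height z - γ.height z' = cross γ.dir z - cross γ.dir z' := by
  simp only [height, cross, Prod.fst_sub, Prod.snd_sub]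
  ring

theorem eq_of_dir_eq_of_height_eq {γ γ' : LatticeChord r} (hdir : γ.dir = γ'.dir) {z : ℤ × ℤ}
    (h : γ.height z = γ'.height z) : γ = γ' := by
  refine eq_of_dir_eq_of_height_eq_zero hdir ?_
  have h1 := γ.height_sub_height γ'.start z
  have h2 := γ'.height_sub_height γ'.start z
  have h3 := γ'.height_point 0
  rw [γ'.point_zero] at h3
  rw [hdir] at h1
  linarith

theorem supNorm_mul_length_le (h : supNorm γ.dir ≤ r) : supNorm γ.dir * γ.length ≤ 2 * r := by
  have hpos : 0 < γ.length := γ.lt_length (i := 0) (by simpa using γ.point_zero ▸ γ.start_mem)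
  have := natAbs_mul_supNorm_lt γ.start_mem (γ.point_mem (Nat.sub_lt hpos one_pos))
  calc supNorm γ.dir * γ.length = (γ.length - 1) * supNorm γ.dir + supNorm γ.dir := by
        rw [← Nat.succ_mul, Nat.succ_eq_add_one, Nat.sub_add_cancel hpos, mul_comm]
    _ ≤ 2 * r := by
        rw [Int.natAbs_natCast] at this
        omega

end LatticeChord

theorem supNorm_mul_card_le_of_cross_eq {r : ℕ} {v : ℤ × ℤ} (hv : Primitive v)
    (hright : Rightward v) (hvr : supNorm v ≤ r) {Z : Finset (ℤ × ℤ)} (hZ : Z ⊆ latticeBox r)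
    {c : ℤ} (hc : ∀ z ∈ Z, cross v z = c) : supNorm v * Z.card ≤ 2 * r := by
  obtain rfl | ⟨b, hb⟩ := Z.eq_empty_or_nonempty
  · simp
  obtain ⟨γ, rfl, i, hi⟩ := LatticeChord.exists_dir_eq hv hright (hZ hb)
  have hsub : Z ⊆ (Finset.range γ.length).image fun i : ℕ => γ.point i := fun z hz => by
    have hheight : γ.height z = 0 := by
      have := γ.height_sub_height z b
      rwa [hc z hz, hc b hb, sub_self, ← hi, γ.height_point, sub_zero] at this
    simpa using γ.exists_point_eq (hZ hz) hheight
  have hcard : Z.card ≤ γ.length := by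
    simpa using (Finset.card_le_card hsub).trans Finset.card_image_le
  exact (Nat.mul_le_mul_left _ hcard).trans (γ.supNorm_mul_length_le hvr)

theorem supNorm_mul_card_le_of_abs_cross_sub_le {r : ℕ} {v : ℤ × ℤ} (hv : Primitive v)
    (hright : Rightward v) (hvr : supNorm v ≤ r) {Z : Finset (ℤ × ℤ)} (hZ : Z ⊆ latticeBox r)
    {c : ℤ} (hc : ∀ z ∈ Z, |cross v z - c| ≤ 2) : supNorm v * Z.card ≤ 10 * r := by
  have hmaps : Set.MapsTo (cross v) Z (Finset.Icc (c - 2) (c + 2)) := fun z hz => by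
    have := abs_le.1 (hc z hz)
    rw [Finset.mem_coe, Finset.mem_Icc]
    constructor <;> linarith
  rw [Finset.card_eq_sum_card_fiberwise hmaps, Finset.mul_sum]
  calc ∑ d ∈ Finset.Icc (c - 2) (c + 2), supNorm v * (Z.filter fun z => cross v z = d).card
      ≤ (Finset.Icc (c - 2) (c + 2)).card • (2 * r) :=
        Finset.sum_le_card_nsmul _ _ _ fun d _ =>
          supNorm_mul_card_le_of_cross_eq hv hright hvr ((Z.filter_subset _).trans hZ)
            fun z hz => (Finset.mem_filter.1 hz).2
    _ = 10 * r := by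
        rw [Int.card_Icc, show c + 2 + 1 - (c - 2) = 5 by ring, smul_eq_mul, ← mul_assoc]
        rfl

theorem latticeLength_zsmul (n : ℤ) (v : ℤ × ℤ) :
    latticeLength (n • v) = n.natAbs * latticeLength v :=
  Int.gcd_mul_left n v.1 v.2

theorem latticeLength_pos_of_cross_ne_zero {v w : ℤ × ℤ} (h : cross v w ≠ 0) :
    0 < latticeLength w := by
  refine Nat.pos_of_ne_zero fun h0 => h ?_
  obtain ⟨h1, h2⟩ := Int.gcd_eq_zero_iff.1 h0
  simp [cross, h1, h2]

theorem Primitive.exists_eq_add_zsmul {v A : ℤ × ℤ} {ε : ℤ} (hε : ε * ε = 1) (hv : Primitive v)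
    (hA : 0 < ε * cross v A) :
    ∃ (w : ℤ × ℤ) (p : ℤ), ε * cross v w = 1 ∧ A = p • v + (ε * cross v A) • w ∧
      0 ≤ p ∧ p < ε * cross v A := by
  obtain ⟨x, y, hxy⟩ := hv
  set q := ε * cross v A with hq
  set w : ℤ × ℤ := ε • (-y, x) with hw
  set n := x * A.1 + y * A.2 with hn
  refine ⟨w + (n / q) • v, n % q, ?_, ?_, Int.emod_nonneg _ hA.ne', Int.emod_lt_of_pos _ hA⟩
  · simp only [hw, cross, Prod.fst_add, Prod.snd_add, Prod.smul_fst, Prod.smul_snd, smul_eq_mul]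
    linear_combination hxy * ε * ε + hε
  · have hmod := Int.emod_add_mul_ediv n q
    have hA' : A = n • v + q • w := by
      simp only [hw, hq, hn, cross]
      ext <;> simp only [Prod.fst_add, Prod.snd_add, Prod.smul_fst, Prod.smul_snd, smul_eq_mul]
      · linear_combination -A.1 * hxy + (v.1 * A.2 - v.2 * A.1) * y * hε
      · linear_combination -A.2 * hxy - (v.1 * A.2 - v.2 * A.1) * x * hε
    calc A = (n % q + q * (n / q)) • v + q • w := by rw [hmod, hA']
      _ = (n % q) • v + q • (w + (n / q) • v) := by module

/-- The point `v + w` next to the base is inside unless `g = 1` and `A` or `A - v` is a multiple of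
`w`, but then this side would have larger lattice length than the base. -/
theorem exists_cross_pos_of_three_le {v A : ℤ × ℤ} {g : ℕ} {ε : ℤ} (hε : ε * ε = 1)
    (hv : Primitive v) (hg : 0 < g) (hA : 3 ≤ ε * cross v A) (hleft : latticeLength A ≤ g)
    (hright : latticeLength (A - (g : ℤ) • v) ≤ g) :
    ∃ w, 0 < ε * cross v w ∧ 0 < ε * cross (A - (g : ℤ) • v) (w - (g : ℤ) • v) ∧
      0 < ε * cross w A := by
  obtain ⟨w, p, hvw, hAw, hp, hpq⟩ := hv.exists_eq_add_zsmul hε (by linarith : 0 < ε * cross v A)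
  set q := ε * cross v A
  have hmid : ε * cross (A - (g : ℤ) • v) (v + w - (g : ℤ) • v) = (g - 1) * (q - 1) + p - 1 := by
    rw [hAw]
    simp only [cross, Prod.fst_add, Prod.snd_add, Prod.fst_sub, Prod.snd_sub, Prod.smul_fst,
      Prod.smul_snd, smul_eq_mul] at hvw ⊢
    linear_combination (g * q + p - q - g) * hvw
  have hlength : ¬q.natAbs * latticeLength w ≤ 1 := by
    have := latticeLength_pos_of_cross_ne_zero (v := v) (w := w) fun h => by simp [h] at hvw
    nlinarith [abs_of_nonneg (by linarith : 0 ≤ q), Int.natCast_natAbs q]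
  refine ⟨v + w, ?_, ?_, ?_⟩
  · simp only [cross, Prod.fst_add, Prod.snd_add] at hvw ⊢
    linarith
  · rw [hmid]
    obtain rfl | hg1 := eq_or_lt_of_le (Nat.succ_le_of_lt hg)
    · have hp0 : p ≠ 0 := by
        rintro rfl
        rw [hAw, zero_smul, zero_add, latticeLength_zsmul] at hleft
        exact hlength hleft
      have hp1 : p ≠ 1 := by
        rintro rfl
        rw [hAw, Nat.cast_succ, Nat.cast_zero, zero_add, add_sub_cancel_left,
          latticeLength_zsmul] at hright
        exact hlength hright
      push_cast
      omega
    · have : (2 : ℤ) ≤ g := by exact_mod_cast hg1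
      nlinarith
  · rw [hAw]
    simp only [cross, Prod.fst_add, Prod.snd_add, Prod.smul_fst, Prod.smul_snd,
      smul_eq_mul] at hvw ⊢
    nlinarith

/-! ### Empty triangles of a Horton grid -/

/-- A placement `R` of the integer grid in the plane that preserves the orientation of every
non-collinear triple and turns every lattice chord into a Horton set. -/
structure IsHortonGrid (r : ℕ) (R : ℤ × ℤ → ℝ × ℝ) : Prop where
  onSide : ∀ σ, ∀ a ∈ latticeBox r, ∀ b ∈ latticeBox r, ∀ c ∈ latticeBox r,
    0 < side σ * cross (b - a) (c - a) → OnSide σ (R a) (R b) (R c)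
  hortonSeq : ∀ γ : LatticeChord r, HortonSeq γ.length fun i => R (γ.point i)

/-- Three grid points whose placements span a triangle with no placed grid point inside. -/
structure IsEmptyTriple (r : ℕ) (R : ℤ × ℤ → ℝ × ℝ) (T : Finset (ℤ × ℤ)) : Prop where
  subset : T ⊆ latticeBox r
  card_eq : T.card = 3
  notMem_interior : ∀ d ∈ latticeBox r, R d ∉ interior (convexHull ℝ (R '' T))

/-- A description of an empty triangle of a Horton grid with apex `apex`: its base joins the terms
`pos` and `pos + 2 ^ logGap` of the subsequence `offset + 2 ^ depth * x` of `chord`, and belongs to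
a dyadic fan of the apex, which has height at most two over the chord. If the fan is a proper
subsequence of the chord, then the apex lies in the sibling subsequence. -/
@[ext]
structure Frame (r : ℕ) (R : ℤ × ℤ → ℝ × ℝ) where
  chord : LatticeChord r
  logGap : ℕ
  depth : ℕ
  σ : Bool
  offset : ℕ
  pos : ℕ
  apex : ℤ × ℤ
  apex_mem : apex ∈ latticeBox r
  abs_height_le : |chord.height apex| ≤ 2
  side_mul_height_nonneg : 0 ≤ side σ * chord.height apex
  fan : DyadicFan chord.length (fun i => R (chord.point i)) (R apex) logGap depth σ offset pos
  sibling : depth ≠ 0 → ∃ α : ℕ, apex = chord.point α ∧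
    offset ≡ α + 2 ^ (depth - 1) [MOD 2 ^ depth]

theorem IsHortonGrid.congr {r : ℕ} {R R' : ℤ × ℤ → ℝ × ℝ} (h : IsHortonGrid r R)
    (hRR' : ∀ σ, ∀ a ∈ latticeBox r, ∀ b ∈ latticeBox r, ∀ c ∈ latticeBox r, a ≠ b → b ≠ c →
      c ≠ a → OnSide σ (R a) (R b) (R c) → OnSide σ (R' a) (R' b) (R' c)) :
    IsHortonGrid r R' := by
  refine ⟨fun σ a ha b hb c hc habc => ?_, fun γ => ?_⟩
  · refine hRR' σ a ha b hb c hc ?_ ?_ ?_ (h.onSide σ a ha b hb c hc habc) <;> rintro rfl <;>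
      simp [cross, mul_comm] at habc
  · refine (h.hortonSeq γ).congr fun σ x hx y hy z hz hxy hyz hzx =>
      hRR' σ _ (γ.point_mem hx) _ (γ.point_mem hy) _ (γ.point_mem hz) ?_ ?_ ?_ <;>
      simpa [γ.point_injective.eq_iff]

theorem LatticeChord.point_add {r : ℕ} (γ : LatticeChord r) (i j : ℕ) :
    γ.point (i + j : ℕ) = γ.point i + (j : ℤ) • γ.dir := by
  simp [point, add_smul, add_assoc]

theorem LatticeChord.cross_dir_sub_point {r : ℕ} (γ : LatticeChord r) (i : ℤ) (z : ℤ × ℤ) :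
    cross γ.dir (z - γ.point i) = γ.height z := by
  simp only [point, height, cross, Prod.fst_add, Prod.snd_add, Prod.fst_sub, Prod.snd_sub,
    Prod.smul_fst, Prod.smul_snd, smul_eq_mul]
  ring

theorem LatticeChord.cross_point_sub_point {r : ℕ} (γ : LatticeChord r) (i j : ℤ) (z : ℤ × ℤ) :
    cross (γ.point j - γ.point i) (z - γ.point i) = (j - i) * γ.height z := by
  rw [← γ.cross_dir_sub_point i z]
  simp only [point, cross, Prod.fst_add, Prod.snd_add, Prod.fst_sub, Prod.snd_sub,
    Prod.smul_fst, Prod.smul_snd, smul_eq_mul]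
  ring

namespace Frame

variable {r : ℕ} {R : ℤ × ℤ → ℝ × ℝ} (F : Frame r R)

/-- The left vertex of the base. -/
def left : ℤ × ℤ := F.chord.point (F.offset + 2 ^ F.depth * F.pos : ℕ)

/-- The right vertex of the base. -/
def right : ℤ × ℤ := F.chord.point (F.offset + 2 ^ F.depth * (F.pos + 2 ^ F.logGap) : ℕ)

/-- The three vertices of the triangle. -/
def vertices : Finset (ℤ × ℤ) := {F.apex, F.left, F.right}

end Frame

theorem latticeLength_sub_comm (v w : ℤ × ℤ) : latticeLength (v - w) = latticeLength (w - v) := by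
  rw [← neg_sub w v, ← neg_one_zsmul, latticeLength_zsmul]
  simp

theorem exists_longest_edge {T : Finset (ℤ × ℤ)} (hT : T.card = 3) :
    ∃ (a b v : ℤ × ℤ) (g : ℕ), T = {a, b, b + (g : ℤ) • v} ∧ Primitive v ∧ Rightward v ∧ 0 < g ∧
      latticeLength (a - b) ≤ g ∧ latticeLength (a - b - (g : ℤ) • v) ≤ g := by
  obtain ⟨a, b, c, hbc, hTabc, hab, hca⟩ : ∃ a b c, b ≠ c ∧ T = {a, b, c} ∧
      latticeLength (a - b) ≤ latticeLength (c - b) ∧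
      latticeLength (a - c) ≤ latticeLength (c - b) := by
    obtain ⟨x, y, z, hxy, hxz, hyz, rfl⟩ := Finset.card_eq_three.1 hT
    have hx := latticeLength_sub_comm x y
    have hy := latticeLength_sub_comm y z
    have hz := latticeLength_sub_comm z x
    rcases le_total (latticeLength (x - y)) (latticeLength (y - z)) with h1 | h1 <;>
      rcases le_total (latticeLength (y - z)) (latticeLength (z - x)) with h2 | h2 <;>
      rcases le_total (latticeLength (z - x)) (latticeLength (x - y)) with h3 | h3
    all_goals first
      | exact ⟨x, y, z, hyz, rfl, by omega, by omega⟩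
      | exact ⟨y, x, z, hxz, by ext; simp; tauto, by omega, by omega⟩
      | exact ⟨z, x, y, hxy, by ext; simp; tauto, by omega, by omega⟩
  obtain ⟨v, hv, hright, h⟩ := exists_primitive_rightward hbc
  generalize latticeLength (c - b) = g at h hab hca
  have hpos : 0 < g := Nat.pos_of_ne_zero fun h0 => hbc (by simpa [h0, eq_comm] using h)
  rcases h with rfl | rfl
  · exact ⟨a, b, v, g, hTabc, hv, hright, hpos, hab, by rwa [sub_sub]⟩
  · exact ⟨a, c, v, g, by rw [hTabc, Finset.pair_comm], hv, hright, hpos, hca, by rwa [sub_sub]⟩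

theorem exists_mem_latticeBox_cross_pos {r : ℕ} {a b v : ℤ × ℤ} {g : ℕ} {ε : ℤ}
    (hε : ε * ε = 1) (hv : Primitive v) (hg : 0 < g) (ha : a ∈ latticeBox r)
    (hb : b ∈ latticeBox r) (hc : b + (g : ℤ) • v ∈ latticeBox r)
    (hfar : 3 ≤ ε * cross v (a - b)) (hleft : latticeLength (a - b) ≤ g)
    (hright : latticeLength (a - b - (g : ℤ) • v) ≤ g) :
    ∃ d ∈ latticeBox r, 0 < ε * cross (b + (g : ℤ) • v - b) (d - b) ∧
      0 < ε * cross (a - (b + (g : ℤ) • v)) (d - (b + (g : ℤ) • v)) ∧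
      0 < ε * cross (b - a) (d - a) := by
  obtain ⟨w, hbase, hcw, hwa⟩ := exists_cross_pos_of_three_le hε hv hg hfar hleft hright
  have hbc : 0 < ε * cross (b + (g : ℤ) • v - b) (b + w - b) := by
    rw [add_sub_cancel_left, add_sub_cancel_left]
    calc 0 < (g : ℤ) * (ε * cross v w) := by positivity
      _ = ε * cross ((g : ℤ) • v) w := by simp [cross]; ring
  have hca : 0 < ε * cross (a - (b + (g : ℤ) • v)) (b + w - (b + (g : ℤ) • v)) := by
    rwa [← sub_sub, add_sub_add_left_eq_sub]
  have hab : 0 < ε * cross (b - a) (b + w - a) := by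
    convert hwa using 2
    simp only [cross, Prod.fst_add, Prod.snd_add, Prod.fst_sub, Prod.snd_sub]
    ring
  exact ⟨b + w, mem_latticeBox_of_cross_pos ha hb hc hab hbc hca, hbc, hca, hab⟩

theorem exists_side_mul_eq_abs (h : ℤ) : ∃ σ, side σ * h = |h| := by
  rcases abs_choice h with h' | h'
  · exact ⟨true, by simp [side, h']⟩
  · exact ⟨false, by simp [side, h']⟩

theorem LatticeChord.natCast_point_injective {r : ℕ} (γ : LatticeChord r) :
    Function.Injective fun i : ℕ => γ.point i :=
  γ.point_injective.comp Nat.cast_injective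

namespace IsHortonGrid

variable {r : ℕ} {R : ℤ × ℤ → ℝ × ℝ}

theorem exists_frame_of_forall_height_eq_zero (hR : IsHortonGrid r R) {T : Finset (ℤ × ℤ)}
    (hT : IsEmptyTriple r R T) {γ : LatticeChord r} (hγ : ∀ z ∈ T, γ.height z = 0) :
    ∃ F : Frame r R, F.vertices = T := by
  have hsub : T ⊆ (Finset.range γ.length).image fun i : ℕ => γ.point i := fun z hz => by
    simpa using γ.exists_point_eq (hT.subset hz) (hγ z hz)
  obtain ⟨I, hI, rfl⟩ := Finset.subset_image_iff.1 hsub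
  obtain ⟨t, u, σ, ρ, k, α, hα, hfan, hmod, rfl⟩ := (hR.hortonSeq γ).exists_dyadicFan
    (fun i hi => Finset.mem_range.1 (hI hi))
    (by simpa [Finset.card_image_of_injective _ γ.natCast_point_injective] using hT.card_eq)
    fun j hj => by simpa [Set.image_image] using hT.notMem_interior _ (γ.point_mem hj)
  refine ⟨⟨γ, t, u + 1, σ, ρ, k, γ.point α, γ.point_mem hα, ?_, ?_, hfan, fun _ => ⟨α, rfl, hmod⟩⟩,
    ?_⟩
  · simp [γ.height_point]
  · simp [γ.height_point]
  · simp [Frame.vertices, Frame.left, Frame.right, Finset.image_insert]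

theorem exists_frame_of_height_ne_zero (hR : IsHortonGrid r R) {a : ℤ × ℤ} {γ : LatticeChord r}
    {i g : ℕ} (hg : 0 < g) (hT : IsEmptyTriple r R {a, γ.point i, γ.point (i + g : ℕ)})
    (hheight : γ.height a ≠ 0) (hleft : latticeLength (a - γ.point i) ≤ g)
    (hright : latticeLength (a - γ.point i - (g : ℤ) • γ.dir) ≤ g) :
    ∃ F : Frame r R, F.vertices = {a, γ.point i, γ.point (i + g : ℕ)} := by
  obtain ⟨σ, hσ⟩ := exists_side_mul_eq_abs (γ.height a)
  have hσ_pos : 0 < side σ * γ.height a := hσ ▸ abs_pos.2 hheight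
  have ha : a ∈ latticeBox r := hT.subset (by simp)
  have hi : γ.point i ∈ latticeBox r := hT.subset (by simp)
  have hj : γ.point (i + g : ℕ) ∈ latticeBox r := hT.subset (by simp)
  have hnot (d : ℤ × ℤ) (hd : d ∈ latticeBox r) :
      ¬InTriangle σ (R (γ.point i)) (R (γ.point (i + g : ℕ))) (R a) (R d) := fun h =>
    hT.notMem_interior d hd (by simpa [Set.image_insert_eq] using h.rotate.rotate.mem_interior)
  have habove (x y : ℕ) (hxy : x < y) (hy : y < γ.length) :
      OnSide σ (R (γ.point x)) (R (γ.point y)) (R a) := by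
    refine hR.onSide σ _ (γ.point_mem (hxy.trans hy)) _ (γ.point_mem hy) a ha ?_
    rw [γ.cross_point_sub_point, mul_left_comm]
    exact mul_pos (by omega) hσ_pos
  have hnear : |γ.height a| ≤ 2 := by
    by_contra! hfar
    rw [γ.point_add] at hnot hj
    obtain ⟨d, hd, hbc, hca, hab⟩ := exists_mem_latticeBox_cross_pos (side_mul_self σ) γ.primitive
      hg ha hi hj (by rwa [γ.cross_dir_sub_point, hσ]) hleft hright
    exact hnot d hd ⟨hR.onSide σ _ hi _ hj d hd hbc, hR.onSide σ _ hj a ha d hd hca,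
      hR.onSide σ a ha _ hi d hd hab⟩
  obtain ⟨t, ht, hfan⟩ := (hR.hortonSeq γ).exists_dyadicFan_zero habove
    (Nat.lt_add_of_pos_right hg) (γ.lt_length hj) fun j hj => hnot _ (γ.point_mem hj)
  exact ⟨⟨γ, t, 0, σ, 0, i, a, ha, hnear, hσ_pos.le, hfan, by simp⟩,
    by simp [Frame.vertices, Frame.left, Frame.right, ht]⟩

theorem exists_frame (hR : IsHortonGrid r R) {T : Finset (ℤ × ℤ)} (hT : IsEmptyTriple r R T) :
    ∃ F : Frame r R, F.vertices = T := by
  obtain ⟨a, b, v, g, rfl, hv, hrightward, hg, hleft, hright⟩ := exists_longest_edge hT.card_eq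
  obtain ⟨γ, rfl, i, rfl⟩ :=
    LatticeChord.exists_dir_eq hv hrightward (hT.subset (show b ∈ _ by simp))
  rw [← γ.point_add] at hT ⊢
  by_cases hheight : γ.height a = 0
  · exact hR.exists_frame_of_forall_height_eq_zero hT (γ := γ) (by simp [hheight, γ.height_point])
  · exact hR.exists_frame_of_height_ne_zero hg hT hheight hleft hright

end IsHortonGrid

/-! ### Counting empty triangles -/

theorem card_le_of_supNorm_mul_card_le {β : Type*} {X : Finset β} {d : β → ℤ × ℤ} {N M : ℕ}
    (hpos : ∀ x ∈ X, 0 < supNorm (d x)) (hN : ∀ x ∈ X, supNorm (d x) ≤ N)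
    (hM : ∀ v, supNorm v * (X.filter fun x => d x = v).card ≤ M) : X.card ≤ N * (8 * M) := by
  have hnorm (j : ℕ) (hj : 0 < j) : (X.filter fun x => supNorm (d x) = j).card ≤ 8 * M := by
    have hmaps : Set.MapsTo d (X.filter fun x => supNorm (d x) = j)
        (Finset.box j : Finset (ℤ × ℤ)) :=
      fun x hx => Int.mem_box.2 (Finset.mem_filter.1 hx).2
    refine Nat.le_of_mul_le_mul_left ?_ hj
    calc j * (X.filter fun x => supNorm (d x) = j).card
        = ∑ v ∈ (Finset.box j : Finset (ℤ × ℤ)),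
            j * ((X.filter fun x => supNorm (d x) = j).filter fun x => d x = v).card := by
          rw [Finset.card_eq_sum_card_fiberwise hmaps, Finset.mul_sum]
      _ ≤ ∑ _ ∈ (Finset.box j : Finset (ℤ × ℤ)), M := by
          refine Finset.sum_le_sum fun v hv => le_trans ?_ (hM v)
          rw [← Int.mem_box.1 hv]
          exact Nat.mul_le_mul_left _
            (Finset.card_le_card (Finset.filter_subset_filter _ (Finset.filter_subset _ _)))
      _ = j * (8 * M) := by
          rw [Finset.sum_const, Int.card_box hj.ne', smul_eq_mul]
          ring
  have hmaps : Set.MapsTo (fun x => supNorm (d x)) X (Finset.Icc 1 N) := fun x hx =>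
    Finset.mem_coe.2 (Finset.mem_Icc.2 ⟨hpos x hx, hN x hx⟩)
  calc X.card = ∑ j ∈ Finset.Icc 1 N, (X.filter fun x => supNorm (d x) = j).card :=
        Finset.card_eq_sum_card_fiberwise hmaps
    _ ≤ ∑ j ∈ Finset.Icc 1 N, 8 * M :=
        Finset.sum_le_sum fun j hj => hnorm j (Finset.mem_Icc.1 hj).1
    _ = N * (8 * M) := by simp

theorem sum_div_two_pow_add_le (r n : ℕ) :
    ∑ t ∈ Finset.range n, ∑ u ∈ Finset.range n, r / 2 ^ (t + u) ≤ 4 * r := by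
  have hgeom (a : ℕ) : ∑ t ∈ Finset.range n, a / 2 ^ t ≤ a * 2 := by
    simpa using Nat.geom_sum_le le_rfl a n
  calc ∑ t ∈ Finset.range n, ∑ u ∈ Finset.range n, r / 2 ^ (t + u)
      ≤ ∑ t ∈ Finset.range n, r / 2 ^ t * 2 := by
        simp_rw [pow_add, ← Nat.div_div_eq_div_mul]
        exact Finset.sum_le_sum fun t _ => hgeom _
    _ ≤ r * 2 * 2 := by
        rw [← Finset.sum_mul]
        exact Nat.mul_le_mul_right _ (hgeom r)
    _ = 4 * r := by ring

theorem side_mul_le_abs (σ : Bool) (h : ℤ) : side σ * h ≤ |h| := by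
  cases σ <;> simp [side, le_abs_self, neg_le_abs]

theorem eq_and_eq_of_add_mul_eq {m a b x y : ℕ} (ha : a < m) (hb : b < m)
    (h : a + m * x = b + m * y) : a = b ∧ x = y := by
  have hmod := congrArg (· % m) h
  have hdiv := congrArg (· / m) h
  have hm : 0 < m := by omega
  simp only [Nat.add_mul_mod_self_left, Nat.mod_eq_of_lt ha, Nat.mod_eq_of_lt hb] at hmod
  simp only [Nat.add_mul_div_left _ _ hm, Nat.div_eq_of_lt ha, Nat.div_eq_of_lt hb,
    zero_add] at hdiv
  exact ⟨hmod, hdiv⟩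

namespace Frame

variable {r : ℕ} {R : ℤ × ℤ → ℝ × ℝ}

/-- The data of a frame that take few values: up to the position of the chord and of the base on
it, they determine the frame. -/
def shape (F : Frame r R) : (ℤ × ℤ) × ℕ × ℕ × ℤ × Bool :=
  (F.chord.dir, F.logGap, F.depth, F.chord.height F.apex, F.σ)

theorem left_index_lt (F : Frame r R) :
    F.offset + 2 ^ F.depth * F.pos < F.chord.length :=
  lt_of_le_of_lt (by gcongr; exact Nat.le_add_right _ _) F.fan.lt

theorem left_mem (F : Frame r R) : F.left ∈ latticeBox r := F.chord.point_mem F.left_index_lt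

theorem right_mem (F : Frame r R) : F.right ∈ latticeBox r := F.chord.point_mem F.fan.lt

theorem right_eq (F : Frame r R) :
    F.right = F.left + ((2 ^ (F.logGap + F.depth) : ℕ) : ℤ) • F.chord.dir := by
  rw [left, ← F.chord.point_add, right]
  congr 2
  ring

theorem two_pow_mul_supNorm_lt (F : Frame r R) :
    2 ^ (F.logGap + F.depth) * supNorm F.chord.dir < r := by
  have := natAbs_mul_supNorm_lt F.left_mem (F.right_eq ▸ F.right_mem)
  rwa [Int.natAbs_natCast] at this

theorem shape_snd_mem (F : Frame r R) : F.shape.2 ∈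
    Finset.range r ×ˢ Finset.range r ×ˢ Finset.Icc (-2 : ℤ) 2 ×ˢ (Finset.univ : Finset Bool) := by
  have hlt : F.logGap + F.depth < r :=
    Nat.lt_two_pow_self.trans_le <| (Nat.le_mul_of_pos_right _ F.chord.rightward.supNorm_pos).trans
      F.two_pow_mul_supNorm_lt.le
  have := abs_le.1 F.abs_height_le
  simp only [shape, Finset.mem_product, Finset.mem_range, Finset.mem_Icc, Finset.mem_univ, and_true]
  omega

theorem supNorm_mul_card_le_of_shape_eq {Y : Finset (Frame r R)} {x : Frame r R → ℤ × ℤ}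
    {κ : (ℤ × ℤ) × ℕ × ℕ × ℤ × Bool} (hκ : ∀ F ∈ Y, F.shape = κ)
    (hmem : ∀ F ∈ Y, x F ∈ latticeBox r) (hinj : Set.InjOn x Y)
    (hnear : ∀ F ∈ Y, ∀ F' ∈ Y, |cross κ.1 (x F) - cross κ.1 (x F')| ≤ 2) :
    supNorm κ.1 * Y.card ≤ 10 * r := by
  obtain rfl | ⟨F, hF⟩ := Y.eq_empty_or_nonempty
  · simp
  have hdir : F.chord.dir = κ.1 := congrArg Prod.fst (hκ F hF)
  rw [← Finset.card_image_of_injOn hinj]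
  refine supNorm_mul_card_le_of_abs_cross_sub_le (c := cross κ.1 (x F)) (hdir ▸ F.chord.primitive)
    (hdir ▸ F.chord.rightward) ?_ (Finset.image_subset_iff.2 hmem)
    (Finset.forall_mem_image.2 fun F' hF' => hnear F' hF' F hF)
  rw [← hdir]
  exact (Nat.le_mul_of_pos_left _ (by positivity)).trans F.two_pow_mul_supNorm_lt.le

theorem card_le_of_injective_of_abs_cross_sub_le {X : Finset (Frame r R)} {x : Frame r R → ℤ × ℤ}
    (hmem : ∀ F ∈ X, x F ∈ latticeBox r)
    (hinj : ∀ F ∈ X, ∀ F' ∈ X, F.shape = F'.shape → x F = x F' → F = F')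
    (hnear : ∀ F ∈ X, ∀ F' ∈ X, F.shape = F'.shape →
      |cross F.chord.dir (x F) - cross F.chord.dir (x F')| ≤ 2) : X.card ≤ 3200 * r ^ 2 := by
  have hshape (κ : ℕ × ℕ × ℤ × Bool) (v : ℤ × ℤ) : supNorm v *
      ((X.filter fun F => F.shape.2 = κ).filter fun F => F.chord.dir = v).card ≤ 10 * r := by
    rw [Finset.filter_filter]
    have hv {F : Frame r R} (hF : F ∈ X.filter fun F => F.shape.2 = κ ∧ F.chord.dir = v) :
        F ∈ X ∧ F.shape = (v, κ) :=
      (Finset.mem_filter.1 hF).imp_right fun h => Prod.ext h.2 h.1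
    refine supNorm_mul_card_le_of_shape_eq (x := x) (fun F hF => (hv hF).2)
      (fun F hF => hmem F (hv hF).1) (fun F hF F' hF' => ?_) fun F hF F' hF' => ?_
    · exact hinj F (hv hF).1 F' (hv hF').1 ((hv hF).2.trans (hv hF').2.symm)
    · obtain rfl : F.chord.dir = v := congrArg Prod.fst (hv hF).2
      exact hnear F (hv hF).1 F' (hv hF').1 ((hv hF).2.trans (hv hF').2.symm)
  have hκ (κ : ℕ × ℕ × ℤ × Bool) : (X.filter fun F => F.shape.2 = κ).card ≤
      r / 2 ^ (κ.1 + κ.2.1) * (8 * (10 * r)) := by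
    refine card_le_of_supNorm_mul_card_le (fun F _ => F.chord.rightward.supNorm_pos)
      (fun F hF => ?_) (hshape κ)
    obtain rfl := (Finset.mem_filter.1 hF).2
    rw [Nat.le_div_iff_mul_le (by positivity), mul_comm]
    exact F.two_pow_mul_supNorm_lt.le
  calc X.card = ∑ κ ∈ Finset.range r ×ˢ Finset.range r ×ˢ Finset.Icc (-2 : ℤ) 2 ×ˢ
          (Finset.univ : Finset Bool), (X.filter fun F => F.shape.2 = κ).card :=
        Finset.card_eq_sum_card_fiberwise fun F _ => F.shape_snd_mem
    _ ≤ ∑ κ ∈ Finset.range r ×ˢ Finset.range r ×ˢ Finset.Icc (-2 : ℤ) 2 ×ˢ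
          (Finset.univ : Finset Bool), r / 2 ^ (κ.1 + κ.2.1) * (8 * (10 * r)) :=
        Finset.sum_le_sum fun κ _ => hκ κ
    _ = (∑ t ∈ Finset.range r, ∑ u ∈ Finset.range r, r / 2 ^ (t + u)) * (800 * r) := by
        have hcard : (Finset.Icc (-2 : ℤ) 2 ×ˢ (Finset.univ : Finset Bool)).card = 10 := rfl
        simp only [Finset.sum_product, Finset.sum_const, Finset.sum_mul, smul_eq_mul, hcard]
        exact Finset.sum_congr rfl fun t _ => Finset.sum_congr rfl fun u _ => by ring
    _ ≤ 4 * r * (800 * r) := Nat.mul_le_mul_right _ (sum_div_two_pow_add_le r r)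
    _ = 3200 * r ^ 2 := by ring

section SameShape

variable {F F' : Frame r R}

theorem cross_apex_sub_cross_apex (hshape : F.shape = F'.shape) :
    cross F.chord.dir F.apex - cross F.chord.dir F'.apex =
      cross F.chord.dir F.left - cross F.chord.dir F'.left := by
  have h := F.chord.height_sub_height F.apex F.left
  have h' := F'.chord.height_sub_height F'.apex F'.left
  simp only [shape, Prod.mk.injEq] at hshape
  rw [left, F.chord.height_point, ← left, hshape.2.2.2.1] at h
  rw [left, F'.chord.height_point, ← left, ← hshape.1] at h'
  linarith

theorem chord_eq_of_apex_eq (hshape : F.shape = F'.shape) (hapex : F.apex = F'.apex) :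
    F.chord = F'.chord := by
  simp only [shape, Prod.mk.injEq] at hshape
  refine LatticeChord.eq_of_dir_eq_of_height_eq hshape.1 (z := F.apex) ?_
  rw [hshape.2.2.2.1, hapex]

theorem eq_of_apex_eq_of_left_eq (hshape : F.shape = F'.shape) (hapex : F.apex = F'.apex)
    (hleft : F.left = F'.left) : F = F' := by
  have hchord := chord_eq_of_apex_eq hshape hapex
  simp only [shape, Prod.mk.injEq] at hshape
  obtain ⟨-, hgap, hdepth, -, hσ⟩ := hshape
  rw [left, left, hchord, hdepth] at hleft
  obtain ⟨hoffset, hpos⟩ := eq_and_eq_of_add_mul_eq (hdepth ▸ F.fan.offset_lt)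
    F'.fan.offset_lt (F'.chord.natCast_point_injective hleft)
  exact Frame.ext hchord hgap hdepth hσ hoffset hpos hapex

theorem left_eq_of_right_eq (hshape : F.shape = F'.shape) (hright : F.right = F'.right) :
    F.left = F'.left := by
  simp only [shape, Prod.mk.injEq] at hshape
  rw [F.right_eq, F'.right_eq, hshape.1, hshape.2.1, hshape.2.2.1] at hright
  exact add_right_cancel hright

theorem offset_eq_of_apex_eq (hshape : F.shape = F'.shape) (hapex : F.apex = F'.apex) :
    F.offset = F'.offset := by
  have hchord := chord_eq_of_apex_eq hshape hapex
  have hdepth : F.depth = F'.depth := congrArg (·.2.2.1) hshape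
  by_cases h0 : F.depth = 0
  · have h1 := F.fan.offset_lt
    have h2 := F'.fan.offset_lt
    rw [← hdepth] at h2
    simp only [h0, pow_zero] at h1 h2
    omega
  · obtain ⟨α, hα, hmod⟩ := F.sibling h0
    obtain ⟨α', hα', hmod'⟩ := F'.sibling (hdepth ▸ h0)
    obtain rfl : α = α' := F'.chord.natCast_point_injective
      (show F'.chord.point α = F'.chord.point α' by rw [← hα', ← hapex, hα, hchord])
    rw [← hdepth] at hmod'
    exact (hmod.trans hmod'.symm).eq_of_lt_of_lt F.fan.offset_lt (hdepth ▸ F'.fan.offset_lt)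

end SameShape

theorem onSide (F : Frame r R) : OnSide F.σ (R F.left) (R F.right) (R F.apex) :=
  F.fan.onSide _ _ (Nat.lt_add_of_pos_right (by positivity)) F.fan.lt

theorem inTriangle {F : Frame r R} {s : ℝ × ℝ}
    (hs : s ∈ interior (convexHull ℝ (R '' F.vertices))) :
    InTriangle F.σ (R F.left) (R F.right) (R F.apex) s := by
  refine InTriangle.rotate ((mem_interior_convexHull_iff F.onSide.rotate.rotate).1 ?_)
  simpa [vertices, Set.image_insert_eq] using hs

theorem card_le_of_apex_eq {X : Finset (Frame r R)} {p : ℤ × ℤ} (hX : ∀ F ∈ X, F.apex = p) :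
    X.card ≤ 3200 * r ^ 2 := by
  have hapex {F F'} (hF : F ∈ X) (hF' : F' ∈ X) : F.apex = F'.apex :=
    (hX F hF).trans (hX F' hF').symm
  refine card_le_of_injective_of_abs_cross_sub_le (x := left) (fun F _ => F.left_mem)
    (fun F hF F' hF' hshape => eq_of_apex_eq_of_left_eq hshape (hapex hF hF'))
    fun F hF F' hF' hshape => ?_
  simp [← cross_apex_sub_cross_apex hshape, hapex hF hF']

theorem card_le_of_shape_imp_left_eq {X : Finset (Frame r R)}
    (hX : ∀ F ∈ X, ∀ F' ∈ X, F.shape = F'.shape → F.left = F'.left) : X.card ≤ 3200 * r ^ 2 := by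
  refine card_le_of_injective_of_abs_cross_sub_le (x := apex) (fun F _ => F.apex_mem)
    (fun F hF F' hF' hshape hapex =>
      eq_of_apex_eq_of_left_eq hshape hapex (hX F hF F' hF' hshape))
    fun F hF F' hF' hshape => ?_
  simp [cross_apex_sub_cross_apex hshape, hX F hF F' hF' hshape]

theorem card_le_of_mem_vertices {X : Finset (Frame r R)} {p : ℤ × ℤ}
    (hX : ∀ F ∈ X, p ∈ F.vertices) : X.card ≤ 9600 * r ^ 2 := by
  have hsub : X ⊆ X.filter (fun F => F.apex = p) ∪ X.filter (fun F => F.left = p) ∪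
      X.filter fun F => F.right = p := fun F hF => by
    have := hX F hF
    simp only [vertices, Finset.mem_insert, Finset.mem_singleton] at this
    simp only [Finset.mem_union, Finset.mem_filter]
    tauto
  have hapex : (X.filter fun F => F.apex = p).card ≤ 3200 * r ^ 2 :=
    card_le_of_apex_eq fun F hF => (Finset.mem_filter.1 hF).2
  have hleft : (X.filter fun F => F.left = p).card ≤ 3200 * r ^ 2 :=
    card_le_of_shape_imp_left_eq fun F hF F' hF' _ =>
      (Finset.mem_filter.1 hF).2.trans (Finset.mem_filter.1 hF').2.symm
  have hright : (X.filter fun F => F.right = p).card ≤ 3200 * r ^ 2 :=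
    card_le_of_shape_imp_left_eq fun F hF F' hF' hshape => left_eq_of_right_eq hshape <|
      (Finset.mem_filter.1 hF).2.trans (Finset.mem_filter.1 hF').2.symm
  have := Finset.card_le_card hsub
  have := Finset.card_union_le (X.filter (fun F => F.apex = p) ∪ X.filter fun F => F.left = p)
    (X.filter fun F => F.right = p)
  have := Finset.card_union_le (X.filter fun F => F.apex = p) (X.filter fun F => F.left = p)
  omega

theorem side_mul_height_le (F : Frame r R) {z : ℤ × ℤ} (hz : z ∈ F.vertices) :
    side F.σ * F.chord.height z ≤ 2 := by
  simp only [vertices, Finset.mem_insert, Finset.mem_singleton] at hz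
  rcases hz with rfl | rfl | rfl
  · exact (side_mul_le_abs _ _).trans F.abs_height_le
  · simp [left, F.chord.height_point]
  · simp [right, F.chord.height_point]

theorem mem_latticeBox_of_mem_vertices (F : Frame r R) {z : ℤ × ℤ} (hz : z ∈ F.vertices) :
    z ∈ latticeBox r := by
  simp only [vertices, Finset.mem_insert, Finset.mem_singleton] at hz
  rcases hz with rfl | rfl | rfl
  exacts [F.apex_mem, F.left_mem, F.right_mem]

theorem onSide_left_right (hR : IsHortonGrid r R) (F : Frame r R) {σ : Bool} {z : ℤ × ℤ}
    (hz : z ∈ latticeBox r) (h : 0 < side σ * F.chord.height z) :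
    OnSide σ (R F.left) (R F.right) (R z) := by
  refine hR.onSide σ _ F.left_mem _ F.right_mem z hz ?_
  rw [left, right, F.chord.cross_point_sub_point, mul_left_comm]
  refine mul_pos (sub_pos.2 (Nat.cast_lt.2 ?_)) h
  gcongr
  exact Nat.lt_add_of_pos_right (by positivity)

theorem side_mul_cross_apex_sub_le (hR : IsHortonGrid r R) {F F' : Frame r R}
    (hshape : F.shape = F'.shape) {s : ℝ × ℝ} (hs : s ∈ interior (convexHull ℝ (R '' F.vertices)))
    (hs' : s ∈ interior (convexHull ℝ (R '' F'.vertices))) :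
    side F.σ * (cross F.chord.dir F'.apex - cross F.chord.dir F.apex) ≤ 2 := by
  by_contra! hfar
  simp only [shape, Prod.mk.injEq] at hshape
  obtain ⟨hdir, -, -, hheight, hσ⟩ := hshape
  have hbeyond {z : ℤ × ℤ} (hz : z ∈ F.vertices) :
      OnSide (!F.σ) (R F'.left) (R F'.right) (R z) := by
    refine F'.onSide_left_right hR (F.mem_latticeBox_of_mem_vertices hz) ?_
    have hzF := F.chord.height_sub_height z F.apex
    have hzF' := F'.chord.height_sub_height z F'.apex
    rw [← hdir, ← hheight] at hzF'
    have hshift : F'.chord.height z = F.chord.height z -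
        (cross F.chord.dir F'.apex - cross F.chord.dir F.apex) := by linarith
    have := F.side_mul_height_le hz
    rw [side_not, hshift, neg_mul, mul_sub]
    linarith
  have hbelow : OnSide (!F.σ) (R F'.left) (R F'.right) s :=
    (inTriangle hs).onSide_of_vertices F'.onSide.ne (hbeyond (by simp [vertices])).le
      (hbeyond (by simp [vertices])).le (hbeyond (by simp [vertices])).le
  rw [hσ] at hbelow
  exact (inTriangle hs').1.not_not_side hbelow

theorem eq_of_mem_interior {F F' : Frame r R} (hshape : F.shape = F'.shape)
    (hapex : F.apex = F'.apex) {s : ℝ × ℝ} (hs : s ∈ interior (convexHull ℝ (R '' F.vertices)))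
    (hs' : s ∈ interior (convexHull ℝ (R '' F'.vertices))) : F = F' := by
  have hchord := chord_eq_of_apex_eq hshape hapex
  have hoffset := offset_eq_of_apex_eq hshape hapex
  simp only [shape, Prod.mk.injEq] at hshape
  obtain ⟨-, hgap, hdepth, -, hσ⟩ := hshape
  have hfan := F'.fan
  have htri := inTriangle hs'
  rw [left, right] at htri
  rw [← hchord, ← hgap, ← hdepth, ← hσ, ← hoffset, ← hapex] at hfan htri
  exact Frame.ext hchord hgap hdepth hσ hoffset (F.fan.base_unique hfan (inTriangle hs) htri) hapex

theorem card_le_of_mem_interior (hR : IsHortonGrid r R) {X : Finset (Frame r R)} {s : ℝ × ℝ}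
    (hX : ∀ F ∈ X, s ∈ interior (convexHull ℝ (R '' F.vertices))) : X.card ≤ 3200 * r ^ 2 := by
  refine card_le_of_injective_of_abs_cross_sub_le (x := apex) (fun F _ => F.apex_mem)
    (fun F hF F' hF' hshape hapex => eq_of_mem_interior hshape hapex (hX F hF) (hX F' hF'))
    fun F hF F' hF' hshape => ?_
  have h := side_mul_cross_apex_sub_le hR hshape (hX F hF) (hX F' hF')
  have h' := side_mul_cross_apex_sub_le hR hshape.symm (hX F' hF') (hX F hF)
  simp only [shape, Prod.mk.injEq] at hshape
  rw [← hshape.1, ← hshape.2.2.2.2] at h'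
  obtain ⟨σ, hσ⟩ := exists_side_mul_eq_abs (cross F.chord.dir F.apex - cross F.chord.dir F'.apex)
  rw [← hσ]
  obtain rfl | rfl : σ = F.σ ∨ σ = !F.σ := by cases σ <;> cases F.σ <;> simp
  · exact h'
  · rwa [side_not, neg_mul, ← mul_neg, neg_sub]

end Frame

theorem exists_finset_card_le {α β : Type*} {X : Finset β} {f : α → β} {p : α → Prop}
    (hX : ∀ b ∈ X, ∃ a, p a ∧ f a = b) : ∃ Y : Finset α, (∀ a ∈ Y, p a) ∧ X.card ≤ Y.card := by
  obtain ⟨Y, hY, rfl⟩ := Finset.subset_set_image_iff.1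
    (show (X : Set β) ⊆ f '' {a | p a} from hX)
  exact ⟨Y, hY, Finset.card_image_le⟩

namespace IsHortonGrid

variable {r : ℕ} {R : ℤ × ℤ → ℝ × ℝ}

theorem card_le_of_mem (hR : IsHortonGrid r R) {X : Finset (Finset (ℤ × ℤ))}
    (hX : ∀ T ∈ X, IsEmptyTriple r R T) {p : ℤ × ℤ} (hp : ∀ T ∈ X, p ∈ T) :
    X.card ≤ 9600 * r ^ 2 := by
  obtain ⟨Y, hY, hXY⟩ := exists_finset_card_le (f := Frame.vertices (r := r) (R := R))
    (p := fun F => p ∈ F.vertices) fun T hT => by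
      obtain ⟨F, rfl⟩ := hR.exists_frame (hX T hT)
      exact ⟨F, hp _ hT, rfl⟩
  exact hXY.trans (Frame.card_le_of_mem_vertices hY)

theorem card_le_of_mem_interior (hR : IsHortonGrid r R) {X : Finset (Finset (ℤ × ℤ))}
    (hX : ∀ T ∈ X, IsEmptyTriple r R T) {s : ℝ × ℝ}
    (hs : ∀ T ∈ X, s ∈ interior (convexHull ℝ (R '' T))) : X.card ≤ 3200 * r ^ 2 := by
  obtain ⟨Y, hY, hXY⟩ := exists_finset_card_le (f := Frame.vertices (r := r) (R := R))
    (p := fun F => s ∈ interior (convexHull ℝ (R '' F.vertices))) fun T hT => by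
      obtain ⟨F, rfl⟩ := hR.exists_frame (hX T hT)
      exact ⟨F, hs _ hT, rfl⟩
  exact hXY.trans (Frame.card_le_of_mem_interior hR hY)

end IsHortonGrid

/-! ### Squared Horton sets -/

/-- An integer point as a point of the plane. -/
def latticePoint (z : ℤ × ℤ) : ℝ × ℝ := (z.1, z.2)

theorem latticePoint_injective : Function.Injective latticePoint := fun a b h => by
  simpa [latticePoint, Prod.ext_iff] using h

theorem orient_latticePoint (a b c : ℤ × ℤ) :
    orient (latticePoint a) (latticePoint b) (latticePoint c) = cross (b - a) (c - a) := by
  simp [orient, latticePoint, cross]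

theorem grid_eq_image_latticePoint (r : ℕ) : grid r = (latticeBox r).image latticePoint := by
  ext p
  simp only [grid, Finset.mem_image, Finset.mem_product, Finset.mem_Icc, mem_latticeBox]
  constructor
  · rintro ⟨⟨x, y⟩, hxy, rfl⟩
    exact ⟨(x, y), by simpa using hxy, by simp [latticePoint]⟩
  · rintro ⟨⟨x, y⟩, ⟨⟨hx, hxr⟩, hy, hyr⟩, rfl⟩
    lift x to ℕ using by omega
    lift y to ℕ using by omega
    exact ⟨(x, y), by simp_all, by simp [latticePoint]⟩

theorem latticePoint_mem_grid {r : ℕ} {z : ℤ × ℤ} (hz : z ∈ latticeBox r) :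
    latticePoint z ∈ grid r :=
  grid_eq_image_latticePoint r ▸ Finset.mem_image_of_mem _ hz

theorem LatticeChord.collinear_latticePoint {r : ℕ} (γ : LatticeChord r) (i : ℤ) :
    Collinear ℝ {latticePoint (γ.point 0), latticePoint (γ.point 1), latticePoint (γ.point i)} := by
  refine (collinear_iff_of_mem (p₀ := latticePoint γ.start) (by simp [point])).2
    ⟨latticePoint γ.dir, ?_⟩
  simp only [Set.mem_insert_iff, Set.mem_singleton_iff, forall_eq_or_imp, forall_eq]
  refine ⟨⟨0, ?_⟩, ⟨1, ?_⟩, ⟨i, ?_⟩⟩ <;> simp [latticePoint, point, add_comm]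

theorem LatticeChord.gridLine_eq {r : ℕ} (γ : LatticeChord r) :
    gridLine r (latticePoint (γ.point 0)) (latticePoint (γ.point 1)) =
      (Finset.range γ.length).image fun i : ℕ => latticePoint (γ.point i) := by
  ext p
  simp only [gridLine, grid_eq_image_latticePoint, Finset.mem_filter, Finset.mem_image,
    Finset.mem_range]
  constructor
  · rintro ⟨⟨z, hz, rfl⟩, hcol⟩
    have h0 := orient_eq_zero_of_collinear hcol
    rw [orient_latticePoint, γ.cross_point_sub_point] at h0
    obtain ⟨i, hi, rfl⟩ := γ.exists_point_eq hz (by simpa using h0)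
    exact ⟨i, hi, rfl⟩
  · rintro ⟨i, hi, rfl⟩
    exact ⟨⟨_, γ.point_mem hi, rfl⟩, γ.collinear_latticePoint i⟩

theorem abs_sub_le_elen (p q : ℝ × ℝ) : |p.1 - q.1| ≤ elen p q ∧ |p.2 - q.2| ≤ elen p q :=
  ⟨Real.abs_le_sqrt (by nlinarith [sq_nonneg (p.2 - q.2)]),
    Real.abs_le_sqrt (by nlinarith [sq_nonneg (p.1 - q.1)])⟩

theorem strictMonoOn_of_abs_sub_intCast_lt {n : ℕ} {u : ℕ → ℝ} {v : ℕ → ℤ} (hv : StrictMono v)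
    (huv : ∀ i < n, |u i - v i| < 1 / 2) : StrictMonoOn u (Set.Iio n) := fun i hi j hj hij => by
  have hstep : (v i : ℝ) + 1 ≤ v j := by exact_mod_cast hv hij
  linarith [(abs_lt.1 (huv i hi)).2, (abs_lt.1 (huv j hj)).1]

theorem OnSide.of_rotCW {σ : Bool} {a b c : ℝ × ℝ} (h : OnSide σ (rotCW a) (rotCW b) (rotCW c)) :
    OnSide σ a b c := by
  have : orient (rotCW a) (rotCW b) (rotCW c) = orient a b c := by
    simp only [orient, rotCW]
    ring
  rwa [OnSide, this] at h

theorem hortonSeq_of_isSquaredHorton {r : ℕ} {ε : ℝ} {f : ℝ × ℝ → ℝ × ℝ}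
    (h : IsSquaredHorton r ε f) (γ : LatticeChord r) :
    HortonSeq γ.length fun i => f (latticePoint (γ.point i)) := by
  rcases le_or_gt γ.length 2 with hshort | hlong
  · exact .small _ _ hshort
  have hmem (i : ℕ) (hi : i < γ.length) := latticePoint_mem_grid (γ.point_mem hi)
  have hne : latticePoint (γ.point 0) ≠ latticePoint (γ.point 1) :=
    latticePoint_injective.ne (γ.point_injective.ne zero_ne_one)
  have hclose (i : ℕ) :=
    abs_sub_le_elen (f (latticePoint (γ.point i))) (latticePoint (γ.point i))
  have hhalf (i : ℕ) (hi : i < γ.length) :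
      elen (f (latticePoint (γ.point i))) (latticePoint (γ.point i)) < 1 / 2 := by
    linarith [h.close _ (hmem i hi), h.eps_lt]
  rcases γ.rightward with hdir | ⟨hdir0, hdir⟩
  · refine hortonSeq_of_isHorton (h.nonvertical _ (hmem 0 (by omega)) _ (hmem 1 (by omega)) hne ?_)
      (strictMonoOn_of_abs_sub_intCast_lt (v := fun i => (γ.point i).1) (fun i j hij => ?_)
        fun i hi => (hclose i).1.trans_lt (hhalf i hi)) ?_
    · simpa [latticePoint, LatticeChord.point] using hdir.ne'
    · simpa [LatticeChord.point] using mul_lt_mul_of_pos_right (Nat.cast_lt.2 hij) hdir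
    · simp [γ.gridLine_eq, Finset.image_image, Function.comp_def]
  · refine (hortonSeq_of_isHorton (P := fun i => rotCW (f (latticePoint (γ.point i))))
      (h.vertical _ (hmem 0 (by omega)) _ (hmem 1 (by omega)) hne ?_)
      (strictMonoOn_of_abs_sub_intCast_lt (v := fun i => (γ.point i).2) (fun i j hij => ?_)
        fun i hi => (hclose i).2.trans_lt (hhalf i hi)) ?_).congr
        fun σ x _ y _ z _ _ _ _ hxyz => hxyz.of_rotCW
    · simp [latticePoint, LatticeChord.point, hdir0]
    · simpa [LatticeChord.point] using mul_lt_mul_of_pos_right (Nat.cast_lt.2 hij) hdir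
    · simp [γ.gridLine_eq, Finset.image_image, Function.comp_def]

theorem isHortonGrid_of_isSquaredHorton {r : ℕ} {ε : ℝ} {f : ℝ × ℝ → ℝ × ℝ}
    (h : IsSquaredHorton r ε f) : IsHortonGrid r (f ∘ latticePoint) := by
  have hleft {a b c : ℤ × ℤ} (ha : a ∈ latticeBox r) (hb : b ∈ latticeBox r)
      (hc : c ∈ latticeBox r) (habc : 0 < cross (b - a) (c - a)) :
      OnSide true (f (latticePoint a)) (f (latticePoint b)) (f (latticePoint c)) := by
    have hpos : 0 < orient (latticePoint a) (latticePoint b) (latticePoint c) := by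
      rw [orient_latticePoint]
      exact_mod_cast habc
    exact OnSide.true_iff.2 ((h.orient_iff _ (latticePoint_mem_grid ha) _ (latticePoint_mem_grid hb)
      _ (latticePoint_mem_grid hc) hpos.ne').1 hpos)
  refine ⟨fun σ a ha b hb c hc habc => ?_, hortonSeq_of_isSquaredHorton h⟩
  cases σ
  · refine (hleft hb ha hc ?_).swap
    simp only [show side false = -1 from rfl, cross, Prod.fst_sub, Prod.snd_sub] at habc ⊢
    linarith
  · exact hleft ha hb hc (by simpa [side] using habc)

/-! ### Blow-ups of Horton grids -/

theorem exists_card_le_four_forall_mem_or_mem {α : Type*} {E : α → α → Prop}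
    (hE : ∀ a b c d e g, E a b → E c d → E e g → ¬[a, b, c, d, e, g].Nodup) :
    ∃ K : Finset α, K.card ≤ 4 ∧ ∀ a b, a ≠ b → E a b → a ∈ K ∨ b ∈ K := by
  by_cases h : ∃ a b c d, E a b ∧ E c d ∧ [a, b, c, d].Nodup
  · obtain ⟨a, b, c, d, hab, hcd, hnodup⟩ := h
    refine ⟨{a, b, c, d}, Finset.card_le_four, fun e g heg h => ?_⟩
    by_contra! hK
    refine hE a b c d e g hab hcd h ?_
    simp only [Finset.mem_insert, Finset.mem_singleton] at hK
    simp only [List.nodup_cons, List.mem_cons] at hnodup ⊢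
    grind
  by_cases h1 : ∃ a b, a ≠ b ∧ E a b
  · obtain ⟨a, b, hne, hab⟩ := h1
    refine ⟨{a, b}, Finset.card_le_two.trans (by norm_num), fun c d hcd hE' => ?_⟩
    by_contra! hK
    refine h ⟨a, b, c, d, hab, hE', ?_⟩
    simp only [Finset.mem_insert, Finset.mem_singleton] at hK
    simp only [List.nodup_cons, List.mem_cons]
    grind
  · exact ⟨∅, by simp, fun a b hne h => (h1 ⟨a, b, hne, h⟩).elim⟩

/-- A Horton grid whose points have been replaced by `k`-point cells `D z` so small that the
orientation of three points of different cells depends only on the cells, and that no point of the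
plane is in the convex hulls of three disjoint pairs of cells. -/
structure IsHortonBlowup (r k : ℕ) (D : ℤ × ℤ → Finset (ℝ × ℝ)) : Prop where
  card_eq : ∀ z ∈ latticeBox r, (D z).card = k
  exists_onSide : ∀ a ∈ latticeBox r, ∀ b ∈ latticeBox r, ∀ c ∈ latticeBox r, a ≠ b → b ≠ c →
    c ≠ a → ∃ σ, ∀ x ∈ D a, ∀ y ∈ D b, ∀ z ∈ D c, OnSide σ x y z
  isHortonGrid : ∀ R : ℤ × ℤ → ℝ × ℝ, (∀ z ∈ latticeBox r, R z ∈ D z) → IsHortonGrid r R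
  inter_eq_empty : ∀ a ∈ latticeBox r, ∀ b ∈ latticeBox r, ∀ c ∈ latticeBox r,
    ∀ d ∈ latticeBox r, ∀ e ∈ latticeBox r, ∀ g ∈ latticeBox r, [a, b, c, d, e, g].Nodup →
    convexHull ℝ (D a ∪ D b : Set (ℝ × ℝ)) ∩ convexHull ℝ (D c ∪ D d : Set (ℝ × ℝ)) ∩
      convexHull ℝ (D e ∪ D g : Set (ℝ × ℝ)) = ∅

/-- The empty triples of the grid placed by `R`. -/
def emptyTriples (r : ℕ) (R : ℤ × ℤ → ℝ × ℝ) : Finset (Finset (ℤ × ℤ)) :=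
  (latticeBox r).powerset.filter (IsEmptyTriple r R)

/-- The sets of cells that can contain the vertices of an empty triangle stabbed by `s`, where `K`
meets every pair of cells with `s` in its convex hull and `R` chooses a point from every cell. -/
def stabbedCells (r : ℕ) (R : ℤ × ℤ → ℝ × ℝ) (K : Finset (ℤ × ℤ)) (s : ℝ × ℝ) :
    Finset (Finset (ℤ × ℤ)) :=
  (latticeBox r).image (fun p => {p}) ∪ (K ×ˢ latticeBox r).image (fun p => {p.1, p.2}) ∪
    K.biUnion (fun p => (emptyTriples r R).filter (p ∈ ·)) ∪
    (emptyTriples r R).filter (fun T => s ∈ interior (convexHull ℝ (R '' T)))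

theorem IsHortonGrid.card_stabbedCells_le {r : ℕ} {R : ℤ × ℤ → ℝ × ℝ} (hR : IsHortonGrid r R)
    {K : Finset (ℤ × ℤ)} (hK : K.card ≤ 4) (s : ℝ × ℝ) :
    (stabbedCells r R K s).card ≤ 41605 * r ^ 2 := by
  have hsingle : ((latticeBox r).image fun p => ({p} : Finset (ℤ × ℤ))).card ≤ r ^ 2 :=
    Finset.card_image_le.trans (card_latticeBox r).le
  have hpair : ((K ×ˢ latticeBox r).image fun p => ({p.1, p.2} : Finset (ℤ × ℤ))).card ≤
      4 * r ^ 2 := by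
    refine Finset.card_image_le.trans ?_
    rw [Finset.card_product, card_latticeBox]
    gcongr
  have hempty (T) (hT : T ∈ emptyTriples r R) : IsEmptyTriple r R T := (Finset.mem_filter.1 hT).2
  have hincident : (K.biUnion fun p => (emptyTriples r R).filter (p ∈ ·)).card ≤
      4 * (9600 * r ^ 2) :=
    (Finset.card_biUnion_le_card_mul _ _ _ fun p _ =>
      hR.card_le_of_mem (fun T hT => hempty T (Finset.filter_subset _ _ hT))
        fun T hT => (Finset.mem_filter.1 hT).2).trans (by gcongr)
  have hstabbed : ((emptyTriples r R).filter fun T : Finset (ℤ × ℤ) =>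
      s ∈ interior (convexHull ℝ (R '' T))).card ≤ 3200 * r ^ 2 :=
    hR.card_le_of_mem_interior (fun T hT => hempty T (Finset.filter_subset _ _ hT)) fun T hT =>
      (Finset.mem_filter.1 hT).2
  calc (stabbedCells r R K s).card
      ≤ r ^ 2 + 4 * r ^ 2 + 4 * (9600 * r ^ 2) + 3200 * r ^ 2 := by
        grw [stabbedCells, Finset.card_union_le, Finset.card_union_le, Finset.card_union_le,
          hsingle, hpair, hincident, hstabbed]
    _ = 41605 * r ^ 2 := by ring

namespace IsHortonBlowup

variable {r k : ℕ} {D : ℤ × ℤ → Finset (ℝ × ℝ)}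

theorem onSide_congr (h : IsHortonBlowup r k D) {a b c : ℤ × ℤ} (ha : a ∈ latticeBox r)
    (hb : b ∈ latticeBox r) (hc : c ∈ latticeBox r) (hab : a ≠ b) (hbc : b ≠ c) (hca : c ≠ a)
    {x x' y y' z z' : ℝ × ℝ} (hx : x ∈ D a) (hx' : x' ∈ D a) (hy : y ∈ D b) (hy' : y' ∈ D b)
    (hz : z ∈ D c) (hz' : z' ∈ D c) {σ : Bool} (hxyz : OnSide σ x y z) : OnSide σ x' y' z' := by
  obtain ⟨τ, hτ⟩ := h.exists_onSide a ha b hb c hc hab hbc hca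
  obtain rfl | rfl : τ = σ ∨ τ = !σ := by cases σ <;> cases τ <;> simp
  · exact hτ x' hx' y' hy' z' hz'
  · exact absurd (hτ x hx y hy z hz) hxyz.not_not_side

theorem exists_cover (h : IsHortonBlowup r k D) (s : ℝ × ℝ) :
    ∃ K : Finset (ℤ × ℤ), K.card ≤ 4 ∧ ∀ a ∈ latticeBox r, ∀ b ∈ latticeBox r, a ≠ b →
      s ∈ convexHull ℝ (D a ∪ D b : Set (ℝ × ℝ)) → a ∈ K ∨ b ∈ K := by
  obtain ⟨K, hcard, hK⟩ := exists_card_le_four_forall_mem_or_mem (E := fun a b =>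
    a ∈ latticeBox r ∧ b ∈ latticeBox r ∧ s ∈ convexHull ℝ (D a ∪ D b : Set (ℝ × ℝ))) <| by
      rintro a b c d e g ⟨ha, hb, hab⟩ ⟨hc, hd, hcd⟩ ⟨he, hg, heg⟩ hnodup
      exact (h.inter_eq_empty a ha b hb c hc d hd e he g hg hnodup).le ⟨⟨hab, hcd⟩, heg⟩
  exact ⟨K, hcard, fun a ha b hb hab hs => hK a b hab ⟨ha, hb, hs⟩⟩

theorem isEmptyTriple (h : IsHortonBlowup r k D) {R : ℤ × ℤ → ℝ × ℝ}
    (hR : ∀ z ∈ latticeBox r, R z ∈ D z) {a b c : ℤ × ℤ} (ha : a ∈ latticeBox r)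
    (hb : b ∈ latticeBox r) (hc : c ∈ latticeBox r) (hab : a ≠ b) (hbc : b ≠ c) (hca : c ≠ a)
    {x y z : ℝ × ℝ} (hx : x ∈ D a) (hy : y ∈ D b) (hz : z ∈ D c)
    (hempty : ∀ p ∈ (latticeBox r).biUnion D, p ∉ interior (convexHull ℝ {x, y, z})) :
    IsEmptyTriple r R {a, b, c} := by
  refine ⟨by simp [Finset.insert_subset_iff, ha, hb, hc],
    Finset.card_eq_three.2 ⟨a, b, c, hab, hca.symm, hbc, rfl⟩, fun d hd hmem => ?_⟩
  obtain ⟨σ, hσ⟩ := h.exists_onSide a ha b hb c hc hab hbc hca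
  have hRabc := hσ _ (hR a ha) _ (hR b hb) _ (hR c hc)
  simp only [Finset.coe_insert, Finset.coe_singleton, Set.image_insert_eq, Set.image_singleton]
    at hmem
  obtain ⟨habd, hbcd, hcad⟩ := (mem_interior_convexHull_iff hRabc).1 hmem
  have hRd := hR d hd
  have hne {p q : ℤ × ℤ} (hpq : OnSide σ (R p) (R q) (R d)) : d ≠ p := by
    rintro rfl
    exact hpq.rotate.rotate.ne rfl
  refine hempty _ (Finset.mem_biUnion.2 ⟨d, hd, hRd⟩)
    (InTriangle.mem_interior (σ := σ) ⟨?_, ?_, ?_⟩)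
  · exact h.onSide_congr ha hb hd hab (hne hbcd).symm (hne habd) (hR a ha) hx (hR b hb) hy hRd hRd
      habd
  · exact h.onSide_congr hb hc hd hbc (hne hcad).symm (hne hbcd) (hR b hb) hy (hR c hc) hz hRd hRd
      hbcd
  · exact h.onSide_congr hc ha hd hca (hne habd).symm (hne hcad) (hR c hc) hz (hR a ha) hx hRd hRd
      hcad

theorem mem_interior_convexHull (h : IsHortonBlowup r k D) {R : ℤ × ℤ → ℝ × ℝ}
    (hR : ∀ z ∈ latticeBox r, R z ∈ D z) {a b c : ℤ × ℤ} (ha : a ∈ latticeBox r)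
    (hb : b ∈ latticeBox r) (hc : c ∈ latticeBox r) (hab : a ≠ b) (hbc : b ≠ c) (hca : c ≠ a)
    {x y z s : ℝ × ℝ} (hx : x ∈ D a) (hy : y ∈ D b) (hz : z ∈ D c)
    (hsab : s ∉ convexHull ℝ (D a ∪ D b : Set (ℝ × ℝ)))
    (hsbc : s ∉ convexHull ℝ (D b ∪ D c : Set (ℝ × ℝ)))
    (hsca : s ∉ convexHull ℝ (D c ∪ D a : Set (ℝ × ℝ)))
    (hs : s ∈ interior (convexHull ℝ {x, y, z})) :
    s ∈ interior (convexHull ℝ {R a, R b, R c}) := by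
  obtain ⟨σ, hσ⟩ := h.exists_onSide a ha b hb c hc hab hbc hca
  exact (((mem_interior_convexHull_iff (hσ x hx y hy z hz)).1 hs).move_vertices hx (hR a ha) hy
    (hR b hb) hz (hR c hc) hsab hsbc hsca).mem_interior

theorem pair_mem_stabbedCells (R : ℤ × ℤ → ℝ × ℝ) {s : ℝ × ℝ} {K : Finset (ℤ × ℤ)}
    (hK : ∀ a ∈ latticeBox r, ∀ b ∈ latticeBox r, a ≠ b →
      s ∈ convexHull ℝ (D a ∪ D b : Set (ℝ × ℝ)) → a ∈ K ∨ b ∈ K)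
    {a b : ℤ × ℤ} (ha : a ∈ latticeBox r) (hb : b ∈ latticeBox r)
    (hs : s ∈ convexHull ℝ (D a ∪ D b : Set (ℝ × ℝ))) : {a, b} ∈ stabbedCells r R K s := by
  have hpair {p q : ℤ × ℤ} (hp : p ∈ K) (hq : q ∈ latticeBox r) :
      {p, q} ∈ (K ×ˢ latticeBox r).image fun p => ({p.1, p.2} : Finset (ℤ × ℤ)) :=
    Finset.mem_image.2 ⟨(p, q), Finset.mem_product.2 ⟨hp, hq⟩, rfl⟩
  simp only [stabbedCells, Finset.mem_union]
  by_cases hab : a = b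
  · exact .inl (.inl (.inl (Finset.mem_image.2 ⟨a, ha, by simp [hab]⟩)))
  obtain haK | hbK := hK a ha b hb hab hs
  · exact .inl (.inl (.inr (hpair haK hb)))
  · exact .inl (.inl (.inr (Finset.pair_comm a b ▸ hpair hbK ha)))

theorem triple_mem_stabbedCells (h : IsHortonBlowup r k D) {R : ℤ × ℤ → ℝ × ℝ}
    (hR : ∀ z ∈ latticeBox r, R z ∈ D z) {s : ℝ × ℝ} {K : Finset (ℤ × ℤ)}
    (hK : ∀ a ∈ latticeBox r, ∀ b ∈ latticeBox r, a ≠ b →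
      s ∈ convexHull ℝ (D a ∪ D b : Set (ℝ × ℝ)) → a ∈ K ∨ b ∈ K)
    {a b c : ℤ × ℤ} (ha : a ∈ latticeBox r) (hb : b ∈ latticeBox r) (hc : c ∈ latticeBox r)
    (hab : a ≠ b) (hbc : b ≠ c) (hca : c ≠ a) {x y z : ℝ × ℝ} (hx : x ∈ D a) (hy : y ∈ D b)
    (hz : z ∈ D c)
    (hempty : ∀ p ∈ (latticeBox r).biUnion D, p ∉ interior (convexHull ℝ {x, y, z}))
    (hs : s ∈ interior (convexHull ℝ {x, y, z})) : {a, b, c} ∈ stabbedCells r R K s := by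
  have hT := h.isEmptyTriple hR ha hb hc hab hbc hca hx hy hz hempty
  have hT' : {a, b, c} ∈ emptyTriples r R :=
    Finset.mem_filter.2 ⟨Finset.mem_powerset.2 hT.1, hT⟩
  simp only [stabbedCells, Finset.mem_union]
  by_cases hmeet : ∃ p ∈ K, p ∈ ({a, b, c} : Finset (ℤ × ℤ))
  · obtain ⟨p, hp, hpT⟩ := hmeet
    exact .inl (.inr (Finset.mem_biUnion.2 ⟨p, hp, Finset.mem_filter.2 ⟨hT', hpT⟩⟩))
  · simp only [Finset.mem_insert, Finset.mem_singleton] at hmeet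
    have hs' := h.mem_interior_convexHull hR ha hb hc hab hbc hca hx hy hz
      (fun hsab => by grind) (fun hsbc => by grind) (fun hsca => by grind) hs
    exact .inr (Finset.mem_filter.2 ⟨hT', by simpa [Set.image_insert_eq] using hs'⟩)

theorem image_mem_stabbedCells (h : IsHortonBlowup r k D) {R : ℤ × ℤ → ℝ × ℝ}
    (hR : ∀ z ∈ latticeBox r, R z ∈ D z) {s : ℝ × ℝ} {K : Finset (ℤ × ℤ)}
    (hK : ∀ a ∈ latticeBox r, ∀ b ∈ latticeBox r, a ≠ b →
      s ∈ convexHull ℝ (D a ∪ D b : Set (ℝ × ℝ)) → a ∈ K ∨ b ∈ K)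
    {t : Finset (ℝ × ℝ)} (ht : IsEmptyTriangleOf ((latticeBox r).biUnion D) t)
    (hs : s ∈ interior (convexHull ℝ t)) {g : ℝ × ℝ → ℤ × ℤ}
    (hg : ∀ x ∈ t, g x ∈ latticeBox r ∧ x ∈ D (g x)) : t.image g ∈ stabbedCells r R K s := by
  obtain ⟨x, y, z, -, -, -, rfl⟩ := Finset.card_eq_three.1 ht.1
  simp only [Finset.mem_insert, Finset.mem_singleton, forall_eq_or_imp, forall_eq] at hg
  obtain ⟨⟨ha, hx⟩, ⟨hb, hy⟩, hc, hz⟩ := hg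
  simp only [Finset.coe_insert, Finset.coe_singleton, Finset.image_insert,
    Finset.image_singleton] at hs ⊢
  have hpair {p q : ℤ × ℤ} (hp : p ∈ latticeBox r) (hq : q ∈ latticeBox r)
      (hsub : {x, y, z} ⊆ (D p ∪ D q : Set (ℝ × ℝ))) : {p, q} ∈ stabbedCells r R K s :=
    pair_mem_stabbedCells R hK hp hq (convexHull_mono hsub (interior_subset hs))
  simp only [Set.insert_subset_iff, Set.singleton_subset_iff, Set.mem_union, Finset.mem_coe]
    at hpair
  by_cases hab : g x = g y
  · simpa [hab] using hpair hb hc ⟨.inl (hab ▸ hx), .inl hy, .inr hz⟩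
  by_cases hbc : g y = g z
  · simpa [hbc] using hpair ha hc ⟨.inl hx, .inr (hbc ▸ hy), .inr hz⟩
  by_cases hca : g z = g x
  · simpa [hca, Finset.pair_comm] using hpair hb ha ⟨.inr hx, .inl hy, .inr (hca ▸ hz)⟩
  exact h.triple_mem_stabbedCells hR hK ha hb hc hab hbc hca hx hy hz
    (by simpa using ht.2.2.2) hs

theorem exists_stabbedCells (h : IsHortonBlowup r k D) {R : ℤ × ℤ → ℝ × ℝ}
    (hR : ∀ z ∈ latticeBox r, R z ∈ D z) {s : ℝ × ℝ} {K : Finset (ℤ × ℤ)}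
    (hK : ∀ a ∈ latticeBox r, ∀ b ∈ latticeBox r, a ≠ b →
      s ∈ convexHull ℝ (D a ∪ D b : Set (ℝ × ℝ)) → a ∈ K ∨ b ∈ K)
    {t : Finset (ℝ × ℝ)} (ht : IsEmptyTriangleOf ((latticeBox r).biUnion D) t)
    (hs : s ∈ interior (convexHull ℝ t)) :
    ∃ T ∈ stabbedCells r R K s, T ⊆ latticeBox r ∧ T.card ≤ 3 ∧ t ⊆ T.biUnion D := by
  have hcell (x : ℝ × ℝ) (hx : x ∈ t) : ∃ z, z ∈ latticeBox r ∧ x ∈ D z := by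
    simpa using ht.2.1 hx
  choose! g hg using hcell
  exact ⟨t.image g, h.image_mem_stabbedCells hR hK ht hs hg,
    Finset.image_subset_iff.2 fun x hx => (hg x hx).1, Finset.card_image_le.trans ht.1.le,
    fun x hx => Finset.mem_biUnion.2 ⟨g x, Finset.mem_image_of_mem g hx, (hg x hx).2⟩⟩

theorem stabbedCount_le (h : IsHortonBlowup r k D) {s : ℝ × ℝ} {W : Finset (Finset (ℤ × ℤ))}
    (hW : ∀ t, IsEmptyTriangleOf ((latticeBox r).biUnion D) t → s ∈ interior (convexHull ℝ t) →
      ∃ T ∈ W, T ⊆ latticeBox r ∧ T.card ≤ 3 ∧ t ⊆ T.biUnion D) :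
    stabbedCount ((latticeBox r).biUnion D) s ≤ W.card * (3 * k) ^ 3 := by
  set W' := W.filter fun T => T ⊆ latticeBox r ∧ T.card ≤ 3
  have hcells (T) (hT : T ∈ W') : ((T.biUnion D).powersetCard 3).card ≤ (3 * k) ^ 3 := by
    obtain ⟨-, hTr, hT3⟩ := Finset.mem_filter.1 hT
    rw [Finset.card_powersetCard]
    refine (Nat.choose_le_pow _ _).trans (Nat.pow_le_pow_left ?_ 3)
    exact (Finset.card_biUnion_le_card_mul _ _ _ fun z hz => (h.card_eq z (hTr hz)).le).trans
      (by gcongr)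
  calc stabbedCount ((latticeBox r).biUnion D) s
      ≤ (W'.biUnion fun T => (T.biUnion D).powersetCard 3).card := by
        rw [stabbedCount, ← Set.ncard_coe_finset]
        refine Set.ncard_le_ncard (fun t ⟨ht, hs⟩ => ?_) (Finset.finite_toSet _)
        obtain ⟨T, hT, hTr, hT3, htT⟩ := hW t ht hs
        exact Finset.mem_coe.2 (Finset.mem_biUnion.2 ⟨T, Finset.mem_filter.2 ⟨hT, hTr, hT3⟩,
          Finset.mem_powersetCard.2 ⟨htT, ht.1⟩⟩)
    _ ≤ W'.card * (3 * k) ^ 3 := Finset.card_biUnion_le_card_mul _ _ _ hcells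
    _ ≤ W.card * (3 * k) ^ 3 := by
        gcongr
        exact Finset.filter_subset _ _

end IsHortonBlowup

theorem diamond_squared_horton_stabbed_bound_general {r k : ℕ} {D : ℤ × ℤ → Finset (ℝ × ℝ)}
    (h : IsHortonBlowup r k D) (s : ℝ × ℝ) :
    stabbedCount ((latticeBox r).biUnion D) s ≤ 1123335 * r ^ 2 * k ^ 3 := by
  rcases Nat.eq_zero_or_pos k with rfl | hk
  · refine (h.stabbedCount_le (W := ∅) fun t ht _ => ?_).trans (by simp)
    obtain ⟨x, hx⟩ := Finset.card_pos.1 (ht.1 ▸ three_pos)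
    obtain ⟨z, hz, hxz⟩ := Finset.mem_biUnion.1 (Finset.mem_coe.1 (ht.2.1 hx))
    exact absurd (h.card_eq z hz) (Finset.card_ne_zero_of_mem hxz)
  have hne (z : ℤ × ℤ) (hz : z ∈ latticeBox r) : ∃ x, x ∈ D z :=
    Finset.card_pos.1 (h.card_eq z hz ▸ hk)
  choose! R hR using hne
  obtain ⟨K, hcard, hK⟩ := h.exists_cover s
  calc stabbedCount ((latticeBox r).biUnion D) s
      ≤ (stabbedCells r R K s).card * (3 * k) ^ 3 :=
        h.stabbedCount_le fun t ht hs => h.exists_stabbedCells hR hK ht hs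
    _ ≤ 41605 * r ^ 2 * (3 * k) ^ 3 := by
        gcongr
        exact (h.isHortonGrid R hR).card_stabbedCells_le hcard s
    _ = 1123335 * r ^ 2 * k ^ 3 := by ring

namespace DiamondSquaredHorton

variable {m k : ℕ} (c : DiamondSquaredHorton m k)

/-- The small `◊` that replaces the grid point `z`. -/
def cell (z : ℤ × ℤ) : Finset (ℝ × ℝ) :=
  c.D (c.f (latticePoint z))

theorem pts_eq_biUnion_cell : c.pts = (latticeBox c.r).biUnion c.cell := by
  rw [pts, grid_eq_image_latticePoint, Finset.image_image, Finset.image_biUnion]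
  rfl

theorem f_latticePoint_mem {z : ℤ × ℤ} (hz : z ∈ latticeBox c.r) :
    c.f (latticePoint z) ∈ (grid c.r).image c.f :=
  Finset.mem_image_of_mem _ (latticePoint_mem_grid hz)

theorem f_latticePoint_ne {a b : ℤ × ℤ} (ha : a ∈ latticeBox c.r) (hb : b ∈ latticeBox c.r)
    (hab : a ≠ b) : c.f (latticePoint a) ≠ c.f (latticePoint b) :=
  c.sqH.inj.ne (latticePoint_mem_grid ha) (latticePoint_mem_grid hb)
    (latticePoint_injective.ne hab)

theorem exists_onSide {p q w : ℤ × ℤ} (hp : p ∈ latticeBox c.r) (hq : q ∈ latticeBox c.r)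
    (hw : w ∈ latticeBox c.r) (hpq : p ≠ q) (hqw : q ≠ w) (hwp : w ≠ p) :
    ∃ σ, (∀ τ, OnSide τ (c.f (latticePoint p)) (c.f (latticePoint q)) (c.f (latticePoint w)) →
      τ = σ) ∧ ∀ x ∈ c.cell p, ∀ y ∈ c.cell q, ∀ z ∈ c.cell w, OnSide σ x y z := by
  have hcell := c.orient_pres _ (c.f_latticePoint_mem hp) _ (c.f_latticePoint_mem hq) _
    (c.f_latticePoint_mem hw) (c.f_latticePoint_ne hp hq hpq)
    (c.f_latticePoint_ne hp hw hwp.symm) (c.f_latticePoint_ne hq hw hqw)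
  by_cases hpos :
      0 < orient (c.f (latticePoint p)) (c.f (latticePoint q)) (c.f (latticePoint w))
  · refine ⟨true, fun τ hτ => ?_, fun x hx y hy z hz =>
      OnSide.true_iff.2 ((hcell x hx y hy z hz).2.1 hpos)⟩
    cases τ
    · exact absurd (OnSide.false_iff.1 hτ) hpos.not_gt
    · rfl
  · refine ⟨false, fun τ hτ => ?_, fun x hx y hy z hz => OnSide.false_iff.2
      (lt_of_le_of_ne (not_lt.1 (mt (hcell x hx y hy z hz).2.2 hpos)) (hcell x hx y hy z hz).1)⟩
    cases τ
    · rfl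
    · exact absurd (OnSide.true_iff.1 hτ) hpos

theorem isHortonBlowup : IsHortonBlowup c.r k c.cell where
  card_eq z hz := c.card_D _ (c.f_latticePoint_mem hz)
  exists_onSide p hp q hq w hw hpq hqw hwp :=
    (c.exists_onSide hp hq hw hpq hqw hwp).imp fun _ => And.right
  isHortonGrid R hR := by
    refine (isHortonGrid_of_isSquaredHorton c.sqH).congr
      fun σ p hp q hq w hw hpq hqw hwp hσ => ?_
    obtain ⟨τ, hτ, hcell⟩ := c.exists_onSide hp hq hw hpq hqw hwp
    obtain rfl := hτ σ hσ
    exact hcell _ (hR p hp) _ (hR q hq) _ (hR w hw)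
  inter_eq_empty a ha b hb p hp d hd e he g hg hnodup := by
    obtain ⟨⟨hab, hap, had, hae, hag⟩, ⟨hbp, hbd, hbe, hbg⟩, ⟨hpd, hpe, hpg⟩, ⟨hde, hdg⟩, heg⟩ :
        (a ≠ b ∧ a ≠ p ∧ a ≠ d ∧ a ≠ e ∧ a ≠ g) ∧ (b ≠ p ∧ b ≠ d ∧ b ≠ e ∧ b ≠ g) ∧
          (p ≠ d ∧ p ≠ e ∧ p ≠ g) ∧ (d ≠ e ∧ d ≠ g) ∧ e ≠ g := by
      simpa using hnodup
    have hdisjoint := c.six_prop _ (c.f_latticePoint_mem ha) _ (c.f_latticePoint_mem hb)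
      _ (c.f_latticePoint_mem hp) _ (c.f_latticePoint_mem hd) _ (c.f_latticePoint_mem he)
      _ (c.f_latticePoint_mem hg)
    simp only [Finset.coe_union] at hdisjoint
    apply hdisjoint <;> apply c.f_latticePoint_ne <;> assumption

end DiamondSquaredHorton

/-- Every point of the plane stabs `O(m·k³)` empty triangles of a `◊`-squared Horton set
with parameters `m` and `k`. -/
theorem diamond_squared_horton_stabbed_bound :
    ∃ C : ℝ, 0 < C ∧ ∀ (m k : ℕ) (c : DiamondSquaredHorton m k) (s : ℝ × ℝ),
      (stabbedCount ↑c.pts s : ℝ) ≤ C * (m : ℝ) * (k : ℝ) ^ 3 := by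
  refine ⟨1123335, by norm_num, fun m k c s => ?_⟩
  have h := diamond_squared_horton_stabbed_bound_general c.isHortonBlowup s
  rw [← c.pts_eq_biUnion_cell, ← c.hm] at h
  exact_mod_cast h
end
end

section
/- Let H = π(G) be a squared Horton set and let Δ be a triple of points of G such that π(Δ) spans an empty triangle of H. Then either the three points of Δ are collinear (Δ is degenerate), or no point of G lies in the interior of the triangle spanned by Δ. -/
open scoped Classical

noncomputable section

/-!
A degenerate triangle has no interior, and a point `p` is interior to a non-degenerate triangle
`a b c` exactly when its three barycentric coordinates are positive. By Cramer's rule these are the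
ratios `orient p b c / orient a b c`, `orient a p c / orient a b c` and
`orient a b p / orient a b c`, so being interior means that substituting `p` for any vertex keeps
the orientation. A squared Horton perturbation `f` keeps the orientations of non-collinear triples
of the grid, so it sends a grid point inside the triangle `a b c` to a point inside the triangle
`f a`, `f b`, `f c`, which is then not empty.
-/

open SignType

theorem orient_swap_right (a b c : ℝ × ℝ) : orient a c b = -orient a b c := by
  unfold orient
  ring

theorem collinear_triple_iff_orient_eq_zero (a b c : ℝ × ℝ) :
    Collinear ℝ ({a, b, c} : Set (ℝ × ℝ)) ↔ orient a b c = 0 := by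
  constructor
  · intro hcol
    obtain ⟨v, hv⟩ := (collinear_iff_of_mem (p₀ := a) (by simp)).1 hcol
    obtain ⟨s, rfl⟩ := hv b (by simp)
    obtain ⟨t, rfl⟩ := hv c (by simp)
    simp only [orient, vadd_eq_add, Prod.fst_add, Prod.snd_add, Prod.smul_fst, Prod.smul_snd,
      smul_eq_mul]
    ring
  · intro h
    rcases eq_or_ne a b with rfl | hab
    · simpa using collinear_pair ℝ a c
    have hnorm : (b.1 - a.1) ^ 2 + (b.2 - a.2) ^ 2 ≠ 0 := by
      intro h0
      exact hab (Prod.ext (by nlinarith) (by nlinarith))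
    refine (collinear_iff_of_mem (p₀ := a) (by simp)).2 ⟨b - a, ?_⟩
    rintro q (rfl | rfl | rfl)
    · exact ⟨0, by simp⟩
    · exact ⟨1, by simp⟩
    · -- The coefficient is that of the orthogonal projection of `q - a` onto `b - a`.
      refine ⟨((b.1 - a.1) * (q.1 - a.1) + (b.2 - a.2) * (q.2 - a.2)) /
        ((b.1 - a.1) ^ 2 + (b.2 - a.2) ^ 2), ?_⟩
      unfold orient at h
      ext <;> simp only [vadd_eq_add, Prod.fst_add, Prod.snd_add, Prod.smul_fst, Prod.smul_snd,
        Prod.fst_sub, Prod.snd_sub, smul_eq_mul] <;> field_simp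
      · linear_combination -(b.2 - a.2) * h
      · linear_combination (b.1 - a.1) * h

theorem affineIndependent_triple_of_orient_ne_zero {a b c : ℝ × ℝ} (h : orient a b c ≠ 0) :
    AffineIndependent ℝ ![a, b, c] :=
  affineIndependent_iff_not_collinear_set.2 (mt (collinear_triple_iff_orient_eq_zero a b c).1 h)

/-- The vertices of a non-degenerate triangle, as an affine basis of the plane; its coordinates are
the barycentric coordinates of the triangle. -/
def triangleBasis {a b c : ℝ × ℝ} (h : orient a b c ≠ 0) : AffineBasis (Fin 3) ℝ (ℝ × ℝ) where
  toFun := ![a, b, c]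
  ind' := affineIndependent_triple_of_orient_ne_zero h
  tot' := by
    have hind := affineIndependent_triple_of_orient_ne_zero h
    exact hind.affineSpan_eq_top_iff_card_eq_finrank_add_one.2 (by simp)

theorem coe_triangleBasis {a b c : ℝ × ℝ} (h : orient a b c ≠ 0) :
    ⇑(triangleBasis h) = ![a, b, c] :=
  rfl

theorem orient_substitute_vertex_eq_coord_mul {a b c : ℝ × ℝ} (h : orient a b c ≠ 0)
    (p : ℝ × ℝ) :
    orient p b c = (triangleBasis h).coord 0 p * orient a b c ∧
      orient a p c = (triangleBasis h).coord 1 p * orient a b c ∧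
      orient a b p = (triangleBasis h).coord 2 p * orient a b c := by
  have hsum := (triangleBasis h).sum_coord_apply_eq_one p
  have hcomb := (triangleBasis h).linear_combination_coord_eq_self p
  simp only [Fin.sum_univ_three, coe_triangleBasis, Matrix.cons_val] at hsum hcomb
  set u := (triangleBasis h).coord 0 p
  set v := (triangleBasis h).coord 1 p
  set w := (triangleBasis h).coord 2 p
  have hu : u = 1 - v - w := by linear_combination hsum
  rw [← hcomb, hu]
  simp only [orient, Prod.fst_add, Prod.snd_add, Prod.smul_fst, Prod.smul_snd, smul_eq_mul]
  refine ⟨?_, ?_, ?_⟩ <;> ring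

theorem orient_ne_zero_of_mem_interior_convexHull {a b c p : ℝ × ℝ}
    (hp : p ∈ interior (convexHull ℝ ({a, b, c} : Set (ℝ × ℝ)))) : orient a b c ≠ 0 := by
  intro h
  have hrank := collinear_iff_finrank_le_one.1 ((collinear_triple_iff_orient_eq_zero a b c).2 h)
  have hspan := interior_convexHull_nonempty_iff_affineSpan_eq_top.1 ⟨p, hp⟩
  rw [← direction_affineSpan, hspan, AffineSubspace.direction_top, finrank_top] at hrank
  simp at hrank

theorem mem_interior_convexHull_triple_iff {a b c : ℝ × ℝ} (h : orient a b c ≠ 0) (p : ℝ × ℝ) :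
    p ∈ interior (convexHull ℝ ({a, b, c} : Set (ℝ × ℝ))) ↔
      sign (orient p b c) = sign (orient a b c) ∧ sign (orient a p c) = sign (orient a b c) ∧
        sign (orient a b p) = sign (orient a b c) := by
  have hrange : ({a, b, c} : Set (ℝ × ℝ)) = Set.range (triangleBasis h) := by
    simp only [coe_triangleBasis, Matrix.range_cons, Matrix.range_empty, Set.union_empty,
      Set.singleton_union]
  have hsign : sign (orient a b c) ≠ 0 := sign_ne_zero.2 h
  obtain ⟨ha, hb, hc⟩ := orient_substitute_vertex_eq_coord_mul h p
  simp only [hrange, AffineBasis.interior_convexHull, Set.mem_ofPred_eq, Fin.forall_fin_succ, ha,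
    hb, hc, sign_mul, mul_eq_right₀ hsign, sign_eq_one_iff]
  simp

/-- The map `f` keeps the orientation of every non-collinear triple of points of `S`: condition (1)
of squared Horton sets, for an arbitrary set of points. Collinear triples are unconstrained. -/
def PreservesOrientationOn (f : ℝ × ℝ → ℝ × ℝ) (S : Set (ℝ × ℝ)) : Prop :=
  ∀ a ∈ S, ∀ b ∈ S, ∀ c ∈ S, orient a b c ≠ 0 →
    sign (orient (f a) (f b) (f c)) = sign (orient a b c)

theorem IsSquaredHorton.preservesOrientationOn {m : ℕ} {ε : ℝ} {f : ℝ × ℝ → ℝ × ℝ}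
    (hsq : IsSquaredHorton m ε f) : PreservesOrientationOn f (grid m) := by
  intro a ha b hb c hc h
  rcases h.lt_or_gt with hneg | hpos
  · -- `orient_iff` controls positive determinants only; swapping `b` and `c` makes them positive.
    have hswap : 0 < orient a c b := by rw [orient_swap_right]; exact neg_pos.2 hneg
    have himage := (hsq.orient_iff a ha c hc b hb hswap.ne').1 hswap
    rw [orient_swap_right, neg_pos] at himage
    rw [sign_neg hneg, sign_neg himage]
  · rw [sign_pos hpos, sign_pos ((hsq.orient_iff a ha b hb c hc h).1 hpos)]

theorem PreservesOrientationOn.map_mem_interior_convexHull_triple {f : ℝ × ℝ → ℝ × ℝ}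
    {S : Set (ℝ × ℝ)} (hf : PreservesOrientationOn f S) {a b c p : ℝ × ℝ} (ha : a ∈ S)
    (hb : b ∈ S) (hc : c ∈ S) (hp : p ∈ S)
    (hmem : p ∈ interior (convexHull ℝ ({a, b, c} : Set (ℝ × ℝ)))) :
    f p ∈ interior (convexHull ℝ ({f a, f b, f c} : Set (ℝ × ℝ))) := by
  have habc := orient_ne_zero_of_mem_interior_convexHull hmem
  have hsign := hf a ha b hb c hc habc
  have sign_map {x y z : ℝ × ℝ} (hx : x ∈ S) (hy : y ∈ S) (hz : z ∈ S)
      (h : sign (orient x y z) = sign (orient a b c)) :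
      sign (orient (f x) (f y) (f z)) = sign (orient (f a) (f b) (f c)) := by
    have hxyz : orient x y z ≠ 0 := by rwa [← sign_ne_zero, h, sign_ne_zero]
    rw [hf x hx y hy z hz hxyz, h, hsign]
  have hfabc : orient (f a) (f b) (f c) ≠ 0 := by rwa [← sign_ne_zero, hsign, sign_ne_zero]
  obtain ⟨hpbc, hapc, habp⟩ := (mem_interior_convexHull_triple_iff habc p).1 hmem
  exact (mem_interior_convexHull_triple_iff hfabc (f p)).2
    ⟨sign_map hp hb hc hpbc, sign_map ha hp hc hapc, sign_map ha hb hp habp⟩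

theorem empty_triangle_degenerate_or_interior_empty_general {f : ℝ × ℝ → ℝ × ℝ}
    {S : Set (ℝ × ℝ)} (hf : PreservesOrientationOn f S) {a b c : ℝ × ℝ} (ha : a ∈ S)
    (hb : b ∈ S) (hc : c ∈ S)
    (hempty : ∀ p ∈ S, f p ∉ interior (convexHull ℝ ({f a, f b, f c} : Set (ℝ × ℝ)))) :
    ∀ p ∈ S, p ∉ interior (convexHull ℝ ({a, b, c} : Set (ℝ × ℝ))) :=
  fun p hp hmem ↦ hempty p hp (hf.map_mem_interior_convexHull_triple ha hb hc hp hmem)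

/-- If a triple of grid points maps under the perturbation of a squared Horton set to an
empty triangle, then it is either degenerate (collinear) or interior-empty in the grid. -/
theorem empty_triangle_degenerate_or_interior_empty (m : ℕ) (ε : ℝ)
    (f : ℝ × ℝ → ℝ × ℝ) (hsq : IsSquaredHorton m ε f) (a b c : ℝ × ℝ)
    (ha : a ∈ grid m) (hb : b ∈ grid m) (hc : c ∈ grid m)
    (hab : a ≠ b) (hac : a ≠ c) (hbc : b ≠ c)
    (hempty : IsEmptyTriangleOf ↑((grid m).image f) {f a, f b, f c}) :
    Collinear ℝ ({a, b, c} : Set (ℝ × ℝ)) ∨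
      ∀ p ∈ grid m, p ∉ interior (convexHull ℝ ({a, b, c} : Set (ℝ × ℝ))) := by
  exact .inr (empty_triangle_degenerate_or_interior_empty_general hsq.preservesOrientationOn
    ha hb hc fun p hp ↦ by simpa using hempty.2.2.2 (f p) (Finset.mem_image_of_mem f hp))
end
end
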